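/- arXiv:math/9802067 — 5 statements merged into one kernel-verified Lean document; each statement's English description precedes it below -/
import Mathlib

section
/- Let A be a C*-algebra and X a right Hilbert A-module. For any x_1,…,x_n, y_1,…,y_n ∈ X, the operator norm of the finite-rank operator Σ_{i=1}^n θ_{x_i,y_i} on X equals the norm in M_n(A) of the product G_x^{1/2} G_y^{1/2}, where G_x = ((x_i|x_j)_A)_{ij} and G_y = ((y_i|y_j)_A)_{ij} are the (positive) Gram matrices. In particular, for x_1,…,x_n, y_1,…,y_n ∈ A one has ‖Σ_{i=1}^n x_i y_i*‖ = ‖((x_i* x_j)_{ij})^{1/2} ((y_i* y_j)_{ij})^{1/2}‖ in M_n(A). -/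
/-!
Write `S = T* T` for `T = ∑ᵢ θ_{xᵢ,yᵢ}`. With `θ(P) = ∑ᵢⱼ θ_{yᵢ Pᵢⱼ, yⱼ}` for a matrix `P`, one has
`S = θ(G_x)` and `θ(P) θ(Q) = θ(P G_y Q)`, hence `S ^ (m + 1) = θ((G_x G_y) ^ m G_x)`. On the matrix
side put `h = (gx gy) (gx gy)* = gx G_y gx`, where `gx`, `gy` are the square roots; then
`(G_x G_y) ^ m G_x = gx h ^ m gx`. As `P ↦ θ(P)` is bounded, `‖S ^ (m + 1)‖ ≤ C ‖h‖ ^ m`; as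
`G_y P G_y = ((yᵢ|θ(P) yⱼ))ᵢⱼ` is a bounded function of `θ(P)`, `‖h ^ (m + 2)‖ ≤ C' ‖S‖ ^ (m + 1)`.
The C*-identity makes the norm multiplicative on dyadic powers of self-adjoint elements (and, through
the Cauchy–Schwarz inequality, of symmetric operators, with no completeness of `X` needed), so letting
the exponent tend to infinity gives `‖T‖² = ‖S‖ = ‖h‖ = ‖gx gy‖²`
(`RightHilbertModule.norm_eq_norm_mul`).

The matrix norm there is that of the C*-algebra `CStarMatrix`. An arbitrary, possibly incomplete,
C*-norm on a C*-algebra coincides with the given one (`IsCStarNorm.eq_norm`): it is at most `1` on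
unitaries, which span, and the power trick and functional calculus do the rest. The statement for
elements of `A` is the case `X = A`.
-/

noncomputable section

universe uO

open scoped BigOperators

/-- A right (pre-)Hilbert C*-module structure on `X` over the unital C*-algebra `A`:
a right `A`-action together with an `A`-valued inner product, whose induced norm is
the given norm on `X`. -/
structure RightHilbertModule (A : Type*) [CStarAlgebra A] (X : Type*)
    [NormedAddCommGroup X] [NormedSpace ℂ X] where
  rsmul : X → A → X
  inner : X → X → A
  rsmul_add : ∀ (x y : X) (a : A), rsmul (x + y) a = rsmul x a + rsmul y a
  rsmul_addA : ∀ (x : X) (a b : A), rsmul x (a + b) = rsmul x a + rsmul x b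
  rsmul_mul : ∀ (x : X) (a b : A), rsmul (rsmul x a) b = rsmul x (a * b)
  rsmul_one : ∀ x : X, rsmul x 1 = x
  rsmul_smulC : ∀ (c : ℂ) (x : X) (a : A), rsmul (c • x) a = c • rsmul x a
  rsmul_smulC' : ∀ (c : ℂ) (x : X) (a : A), rsmul x (c • a) = c • rsmul x a
  inner_add_right : ∀ x y z : X, inner x (y + z) = inner x y + inner x z
  inner_smulC_right : ∀ (c : ℂ) (x y : X), inner x (c • y) = c • inner x y
  inner_rsmul_right : ∀ (x y : X) (a : A), inner x (rsmul y a) = inner x y * a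
  star_inner : ∀ x y : X, star (inner x y) = inner y x
  inner_self_pos : ∀ x : X, ∃ a : A, inner x x = star a * a
  inner_self_eq_zero : ∀ {x : X}, inner x x = 0 → x = 0
  norm_sq_eq : ∀ x : X, ‖x‖ ^ 2 = ‖inner x x‖
  norm_inner_le : ∀ x y : X, ‖inner x y‖ ≤ ‖x‖ * ‖y‖
  norm_rsmul_le : ∀ (x : X) (a : A), ‖rsmul x a‖ ≤ ‖x‖ * ‖a‖

/-- A Hilbert C*-bimodule over `A`: a right Hilbert `A`-module together with a left
action of `A` by adjointable operators. -/
structure HilbertBimodule (A : Type*) [CStarAlgebra A] (X : Type*)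
    [NormedAddCommGroup X] [NormedSpace ℂ X] extends RightHilbertModule A X where
  lsmul : A → X → X
  lsmul_add : ∀ (a : A) (x y : X), lsmul a (x + y) = lsmul a x + lsmul a y
  lsmul_addA : ∀ (a b : A) (x : X), lsmul (a + b) x = lsmul a x + lsmul b x
  lsmul_mul : ∀ (a b : A) (x : X), lsmul (a * b) x = lsmul a (lsmul b x)
  lsmul_one : ∀ x : X, lsmul 1 x = x
  lsmul_smulC : ∀ (c : ℂ) (a : A) (x : X), lsmul a (c • x) = c • lsmul a x
  lsmul_rsmul : ∀ (a : A) (x : X) (b : A), rsmul (lsmul a x) b = lsmul a (rsmul x b)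
  inner_lsmul : ∀ (a : A) (x y : X), inner (lsmul a x) y = inner x (lsmul (star a) y)

namespace HilbertBimodule

variable {A : Type*} [CStarAlgebra A] {X : Type*}
  [NormedAddCommGroup X] [NormedSpace ℂ X]

/-- The left action of `A` is faithful (equivalently, isometric). -/
def LeftFaithful (M : HilbertBimodule A X) : Prop :=
  ∀ a : A, (∀ x : X, M.lsmul a x = 0) → a = 0

/-- The module is full: the closed linear span of inner products is all of `A`. -/
def IsFull (M : HilbertBimodule A X) : Prop :=
  (Submodule.span ℂ {a : A | ∃ x y : X, a = M.inner x y}).topologicalClosure = ⊤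

/-- `u` is a finite (right) basis of `X`. -/
def IsBasis {n : ℕ} (M : HilbertBimodule A X) (u : Fin n → X) : Prop :=
  ∀ x : X, (∑ i, M.rsmul (u i) (M.inner (u i) x)) = x

/-- The inner product of `X^{⊗ r}`, expressed on words:
`⟨x₁⊗…⊗x_r, y₁⊗…⊗y_r⟩ = ⟨x_r, φ(⟨x_{r-1}, φ(…⟨x₁,y₁⟩…) y_{r-1}⟩) y_r⟩`. -/
def innerWord (M : HilbertBimodule A X) : List X → List X → A
  | [], [] => 1
  | [x], [y] => M.inner x y
  | x :: x' :: xs, y :: y' :: ys =>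
      M.innerWord (x' :: xs) (M.lsmul (M.inner x y) y' :: ys)
  | _, _ => 0

/-- `J` is an `X`-invariant ideal. -/
def XInvariant (M : HilbertBimodule A X) (J : Submodule ℂ A) : Prop :=
  ∀ x y : X, ∀ a ∈ J, M.inner x (M.lsmul a y) ∈ J

/-- The ideal `J_X = {a : (x|φ(a)y) ∈ J for all x y}` associated with `J`. -/
def JX (M : HilbertBimodule A X) (J : Submodule ℂ A) : Set A :=
  {a : A | ∀ x y : X, M.inner x (M.lsmul a y) ∈ J}

end HilbertBimodule

/-- A closed two-sided ideal of a normed algebra, given as a closed subspace which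
absorbs multiplication. -/
def IsClosedIdeal {B : Type*} [NormedRing B] [NormedAlgebra ℂ B] (J : Submodule ℂ B) : Prop :=
  IsClosed (J : Set B) ∧ ∀ b : B, ∀ j ∈ J, b * j ∈ J ∧ j * b ∈ J

/-- `A` is `X`-simple: it has no proper nonzero closed `X`-invariant ideal. -/
def HilbertBimodule.XSimple {A : Type*} [CStarAlgebra A] {X : Type*}
    [NormedAddCommGroup X] [NormedSpace ℂ X] (M : HilbertBimodule A X) : Prop :=
  ∀ J : Submodule ℂ A, IsClosedIdeal J → M.XInvariant J → J = ⊥ ∨ J = ⊤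

/-- A representation of the Hilbert bimodule `X` in a C*-algebra `D`: a linear map
`V : X → D` and a unital *-homomorphism `ρ : A → D` satisfying the bimodule relations. -/
structure HilbertBimodule.Represents {A : Type*} [CStarAlgebra A] {X : Type*}
    [NormedAddCommGroup X] [NormedSpace ℂ X] (M : HilbertBimodule A X)
    {D : Type*} [CStarAlgebra D] (V : X → D) (ρ : A →⋆ₐ[ℂ] D) : Prop where
  map_add : ∀ x y : X, V (x + y) = V x + V y
  map_smul : ∀ (c : ℂ) (x : X), V (c • x) = c • V x
  map_rsmul : ∀ (x : X) (a : A), V (M.rsmul x a) = V x * ρ a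
  map_lsmul : ∀ (a : A) (x : X), V (M.lsmul a x) = ρ a * V x
  map_inner : ∀ x y : X, star (V x) * V y = ρ (M.inner x y)

/-- The product `S_{x₁} ⋯ S_{x_r}` associated with a word `x₁ … x_r`. -/
def wordOf {X O : Type*} [Monoid O] (S : X → O) : List X → O
  | [] => 1
  | x :: xs => S x * wordOf S xs

/-- The Pimsner C*-algebra of a (full, finite projective) Hilbert bimodule `X` with
finite basis `u`: a C*-algebra `O` generated by a universal representation of `X`
with support `1`. -/
structure PimsnerAlgebra {A : Type*} [CStarAlgebra A] {X : Type*}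
    [NormedAddCommGroup X] [NormedSpace ℂ X] (M : HilbertBimodule A X)
    {n : ℕ} (u : Fin n → X) (O : Type uO) [CStarAlgebra O] where
  ja : A →⋆ₐ[ℂ] O
  S : X → O
  rep : M.Represents S ja
  supp : (∑ i, S (u i) * star (S (u i))) = 1
  generates :
    (StarAlgebra.adjoin ℂ (Set.range S ∪ Set.range ja)).topologicalClosure = ⊤
  universal : ∀ {D : Type uO} [CStarAlgebra D] (V : X → D) (ρ : A →⋆ₐ[ℂ] D),
    M.Represents V ρ → (∑ i, V (u i) * star (V (u i))) = 1 →
    ∃ Φ : O →⋆ₐ[ℂ] D, (∀ x : X, Φ (S x) = V x) ∧ ∀ a : A, Φ (ja a) = ρ a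

namespace PimsnerAlgebra

variable {A : Type*} [CStarAlgebra A] {X : Type*}
  [NormedAddCommGroup X] [NormedSpace ℂ X] {M : HilbertBimodule A X}
  {n : ℕ} {u : Fin n → X} {O : Type*} [CStarAlgebra O]

/-- The space `F_{r,s}`, the image of `K_A(X^{⊗r}, X^{⊗s})` in `O_X`: the linear span of
the products `S_{x₁}⋯S_{x_s} S_{y_r}*⋯S_{y_1}*`. -/
def Fspace (P : PimsnerAlgebra M u O) (r s : ℕ) : Submodule ℂ O :=
  Submodule.span ℂ
    {d : O | ∃ xs ys : List X, xs.length = s ∧ ys.length = r ∧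
      d = wordOf P.S xs * star (wordOf P.S ys)}

/-- The homogeneous subspace of degree `k` of the dense graded subalgebra of `O_X`. -/
def homog (P : PimsnerAlgebra M u O) (k : ℤ) : Submodule ℂ O :=
  Submodule.span ℂ
    {d : O | ∃ xs ys : List X, (xs.length : ℤ) - (ys.length : ℤ) = k ∧
      d = wordOf P.S xs * star (wordOf P.S ys)}

/-- The fixed point algebra `O_X^{(0)}` of the gauge action. -/
def Ozero (P : PimsnerAlgebra M u O) : Submodule ℂ O :=
  (P.homog 0).topologicalClosure

/-- The copy of `K_A(X^{⊗r})` inside `O_X`. -/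
def Kspace (P : PimsnerAlgebra M u O) (r : ℕ) : Submodule ℂ O :=
  (P.Fspace r r).topologicalClosure

/-- The relative commutant `A' ∩ O_X`. -/
def commA (P : PimsnerAlgebra M u O) : Set O :=
  {T : O | ∀ a : A, P.ja a * T = T * P.ja a}

/-- The canonical completely positive map `σ(T) = Σ_i S_{u_i} T S_{u_i}*`. -/
def gsh (P : PimsnerAlgebra M u O) (T : O) : O :=
  ∑ i, P.S (u i) * T * star (P.S (u i))

/-- The closed ideal of `O_X` generated by an ideal `J` of `A`:
the closed linear span of `X^r J (X^s)*`. -/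
def idealTo (P : PimsnerAlgebra M u O) (J : Submodule ℂ A) : Submodule ℂ O :=
  (Submodule.span ℂ
    {d : O | ∃ (xs ys : List X) (a : A), a ∈ J ∧
      d = wordOf P.S xs * P.ja a * star (wordOf P.S ys)}).topologicalClosure

/-- The restriction `𝒥 ∩ A` of an ideal `𝒥` of `O_X` to `A`. -/
def idealRes (P : PimsnerAlgebra M u O) (𝒥 : Submodule ℂ O) : Submodule ℂ A :=
  𝒥.comap P.ja.toAlgHom.toLinearMap

end PimsnerAlgebra

/-- A C*-norm on a complex *-algebra. -/
structure IsCStarNorm {B : Type*} [Ring B] [StarRing B] [Algebra ℂ B] (N : B → ℝ) : Prop where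
  nonneg : ∀ b, 0 ≤ N b
  eq_zero : ∀ b, N b = 0 ↔ b = 0
  add_le : ∀ b c, N (b + c) ≤ N b + N c
  smul_eq : ∀ (z : ℂ) (b), N (z • b) = ‖z‖ * N b
  mul_le : ∀ b c, N (b * c) ≤ N b * N c
  cstar : ∀ b, N (star b * b) = N b ^ 2

/-- A map between C*-algebras is completely isometric if all its matrix amplifications
are isometric (with respect to the unique C*-norms on the matrix algebras). -/
def CompletelyIsometric {A O : Type*} [CStarAlgebra A] [CStarAlgebra O] (f : A → O) : Prop :=
  ∀ (m : ℕ) (NA : Matrix (Fin m) (Fin m) A → ℝ) (NO : Matrix (Fin m) (Fin m) O → ℝ),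
    IsCStarNorm NA → IsCStarNorm NO →
    ∀ aM : Matrix (Fin m) (Fin m) A, NO (aM.map f) = NA aM

/-- Condition (I)-freeness for the bimodule `X` (realized inside a Pimsner algebra). -/
def PimsnerAlgebra.IFree {A : Type*} [CStarAlgebra A] {X : Type*}
    [NormedAddCommGroup X] [NormedSpace ℂ X] {M : HilbertBimodule A X}
    {n : ℕ} {u : Fin n → X} {O : Type*} [CStarAlgebra O]
    (P : PimsnerAlgebra M u O) : Prop :=
  ∀ k : ℕ, ∃ (p q r : ℕ) (T : O),
    T ∈ (P.Fspace p q).topologicalClosure ∧ T ∈ P.commA ∧ ‖T‖ = 1 ∧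
    (∀ a : A, P.ja a * (star T * T) ∈ P.Kspace r) ∧
    CompletelyIsometric (fun a : A => P.ja a * (star T * T)) ∧
    ‖star T * (P.gsh)^[k] T‖ < 1

/-- Data exhibiting `(A', X')` as the quotient of the Hilbert bimodule `X` over `A`
by a closed `X`-invariant ideal `J` (so `A' = A/J` and `X' = X/X_J`). -/
structure QuotientBimodule {A : Type*} [CStarAlgebra A] {X : Type*}
    [NormedAddCommGroup X] [NormedSpace ℂ X] (M : HilbertBimodule A X)
    (J : Submodule ℂ A) {A' : Type*} [CStarAlgebra A'] (q : A →⋆ₐ[ℂ] A')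
    {X' : Type*} [NormedAddCommGroup X'] [NormedSpace ℂ X']
    (M' : HilbertBimodule A' X') (qX : X → X') : Prop where
  q_surj : Function.Surjective q
  q_ker : ∀ a : A, q a = 0 ↔ a ∈ J
  qX_add : ∀ x y : X, qX (x + y) = qX x + qX y
  qX_smul : ∀ (c : ℂ) (x : X), qX (c • x) = c • qX x
  qX_surj : Function.Surjective qX
  qX_ker : ∀ x : X, qX x = 0 ↔ M.inner x x ∈ J
  inner_compat : ∀ x y : X, M'.inner (qX x) (qX y) = q (M.inner x y)
  rsmul_compat : ∀ (x : X) (a : A), qX (M.rsmul x a) = M'.rsmul (qX x) (q a)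
  lsmul_compat : ∀ (a : A) (x : X), qX (M.lsmul a x) = M'.lsmul (q a) (qX x)

/-- Condition (II)-freeness: every quotient of `X` by a closed `X`-invariant ideal `J`
with `J_X = J` is (I)-free. -/
def HilbertBimodule.IIFree {A : Type*} [CStarAlgebra A] {X : Type*}
    [NormedAddCommGroup X] [NormedSpace ℂ X] (M : HilbertBimodule A X) : Prop :=
  ∀ J : Submodule ℂ A, IsClosedIdeal J → M.XInvariant J → (∀ a ∈ M.JX J, a ∈ J) →
    ∀ (A' : Type*) [CStarAlgebra A'] (q : A →⋆ₐ[ℂ] A')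
      (X' : Type*) [NormedAddCommGroup X'] [NormedSpace ℂ X']
      (M' : HilbertBimodule A' X') (qX : X → X'),
      QuotientBimodule M J q M' qX →
      ∀ (m : ℕ) (v : Fin m → X'), M'.IsBasis v →
      ∀ (O' : Type*) [CStarAlgebra O'] (P' : PimsnerAlgebra M' v O'), P'.IFree


namespace RightHilbertModule

variable {A : Type*} [CStarAlgebra A] {X : Type*}
  [NormedAddCommGroup X] [NormedSpace ℂ X]

/-- `u` is a finite basis of the right Hilbert module `X`. -/
def IsBasis {n : ℕ} (M : RightHilbertModule A X) (u : Fin n → X) : Prop :=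
  ∀ x : X, (∑ i, M.rsmul (u i) (M.inner (u i) x)) = x

/-- The module is full: the closed linear span of inner products is all of `A`. -/
def IsFull (M : RightHilbertModule A X) : Prop :=
  (Submodule.span ℂ {a : A | ∃ x y : X, a = M.inner x y}).topologicalClosure = ⊤

end RightHilbertModule

/-- An adjointable operator between right Hilbert C*-modules. -/
structure Adjointable {A : Type*} [CStarAlgebra A] {X Y : Type*}
    [NormedAddCommGroup X] [NormedSpace ℂ X] [NormedAddCommGroup Y] [NormedSpace ℂ Y]
    (M : RightHilbertModule A X) (N : RightHilbertModule A Y) where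
  toFun : X →L[ℂ] Y
  adjFun : Y →L[ℂ] X
  inner_adj : ∀ (x : X) (y : Y), N.inner (toFun x) y = M.inner x (adjFun y)

namespace Adjointable

variable {A : Type*} [CStarAlgebra A] {X Y Z : Type*}
  [NormedAddCommGroup X] [NormedSpace ℂ X] [NormedAddCommGroup Y] [NormedSpace ℂ Y]
  [NormedAddCommGroup Z] [NormedSpace ℂ Z]
  {M : RightHilbertModule A X} {N : RightHilbertModule A Y} {L : RightHilbertModule A Z}

/-- The adjoint of an adjointable operator. -/
def flip (k : Adjointable M N) : Adjointable N M where
  toFun := k.adjFun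
  adjFun := k.toFun
  inner_adj := fun y x => by
    have h := congrArg star (k.inner_adj x y)
    rw [N.star_inner, M.star_inner] at h
    exact h.symm

/-- Composition of adjointable operators. -/
def comp (k : Adjointable M N) (k' : Adjointable L M) : Adjointable L N where
  toFun := k.toFun.comp k'.toFun
  adjFun := k'.adjFun.comp k.adjFun
  inner_adj := fun z y => by
    simp only [ContinuousLinearMap.comp_apply]
    rw [k.inner_adj, k'.inner_adj]

end Adjointable

/-- An abstract presentation of the `r`-fold internal tensor power `X^{⊗ r}`:
a Hilbert bimodule `T` together with a map `ι` (for `x₁ ⊗ … ⊗ x_r`) which is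
`A`-balanced, compatible with the module actions, total, and induces the canonical
inner product of the tensor power. -/
structure TensorPowerPresentation {A : Type*} [CStarAlgebra A] {X : Type*}
    [NormedAddCommGroup X] [NormedSpace ℂ X] (M : HilbertBimodule A X) (r : ℕ)
    {T : Type*} [NormedAddCommGroup T] [NormedSpace ℂ T] (Mr : HilbertBimodule A T)
    (ι : (Fin r → X) → T) : Prop where
  inner_eq : ∀ x y : Fin r → X,
    Mr.inner (ι x) (ι y) = M.innerWord (List.ofFn x) (List.ofFn y)
  total : (Submodule.span ℂ (Set.range ι)).topologicalClosure = ⊤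
  add_slot : ∀ (x : Fin r → X) (i : Fin r) (z z' : X),
    ι (Function.update x i (z + z')) = ι (Function.update x i z) + ι (Function.update x i z')
  smul_slot : ∀ (x : Fin r → X) (i : Fin r) (c : ℂ) (z : X),
    ι (Function.update x i (c • z)) = c • ι (Function.update x i z)
  balanced : ∀ (x : Fin r → X) (i j : Fin r) (a : A), (j : ℕ) = (i : ℕ) + 1 →
    ι (Function.update x i (M.rsmul (x i) a)) = ι (Function.update x j (M.lsmul a (x j)))
  rsmul_eq : ∀ (x : Fin r → X) (i : Fin r) (a : A), (i : ℕ) + 1 = r →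
    Mr.rsmul (ι x) a = ι (Function.update x i (M.rsmul (x i) a))
  lsmul_eq : ∀ (x : Fin r → X) (i : Fin r) (a : A), (i : ℕ) = 0 →
    Mr.lsmul a (ι x) = ι (Function.update x i (M.lsmul a (x i)))

/-- Data exhibiting `(A', X')` as the quotient right Hilbert module of `X` over `A`
by a closed ideal `J` (so `A' = A/J` and `X' = X/X_J`). -/
structure QuotientRightModule {A : Type*} [CStarAlgebra A] {X : Type*}
    [NormedAddCommGroup X] [NormedSpace ℂ X] (M : HilbertBimodule A X)
    (J : Submodule ℂ A) {A' : Type*} [CStarAlgebra A'] (q : A →⋆ₐ[ℂ] A')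
    {X' : Type*} [NormedAddCommGroup X'] [NormedSpace ℂ X']
    (M' : RightHilbertModule A' X') (qX : X → X') : Prop where
  q_surj : Function.Surjective q
  q_ker : ∀ a : A, q a = 0 ↔ a ∈ J
  qX_add : ∀ x y : X, qX (x + y) = qX x + qX y
  qX_smul : ∀ (c : ℂ) (x : X), qX (c • x) = c • qX x
  qX_surj : Function.Surjective qX
  qX_ker : ∀ x : X, qX x = 0 ↔ M.inner x x ∈ J
  inner_compat : ∀ x y : X, M'.inner (qX x) (qX y) = q (M.inner x y)
  rsmul_compat : ∀ (x : X) (a : A), qX (M.rsmul x a) = M'.rsmul (qX x) (q a)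

/-- A Hilbert bimodule of finite type in the sense of Kajiwara–Watatani: it also
carries a left `A`-valued inner product admitting a finite left basis, compatible with
the right structure. -/
structure HilbertBimodule.FiniteType {A : Type*} [CStarAlgebra A] {X : Type*}
    [NormedAddCommGroup X] [NormedSpace ℂ X] (M : HilbertBimodule A X) where
  linner : X → X → A
  m : ℕ
  lbasis : Fin m → X
  linner_add_left : ∀ x y z : X, linner (x + y) z = linner x z + linner y z
  linner_smulC_left : ∀ (c : ℂ) (x y : X), linner (c • x) y = c • linner x y
  linner_lsmul_left : ∀ (a : A) (x y : X), linner (M.lsmul a x) y = a * linner x y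
  star_linner : ∀ x y : X, star (linner x y) = linner y x
  linner_self_pos : ∀ x : X, ∃ a : A, linner x x = star a * a
  linner_self_eq_zero : ∀ {x : X}, linner x x = 0 → x = 0
  linner_rsmul : ∀ (x : X) (a : A) (y : X),
    linner (M.rsmul x a) y = linner x (M.rsmul y (star a))
  lbasis_spec : ∀ x : X, (∑ i, M.lsmul (linner x (lbasis i)) (lbasis i)) = x

/-- `E` is a conditional expectation from the subset `dom` of a C*-algebra onto `C`. -/
structure IsCondExpOn {O : Type*} [CStarAlgebra O] (E : O → O) (dom C : Set O) : Prop where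
  mem : ∀ T ∈ dom, E T ∈ C
  fixes : ∀ T ∈ C, E T = T
  map_add : ∀ T ∈ dom, ∀ T' ∈ dom, E (T + T') = E T + E T'
  map_smul : ∀ (c : ℂ), ∀ T ∈ dom, E (c • T) = c • E T
  map_star : ∀ T ∈ dom, E (star T) = star (E T)
  pos : ∀ T ∈ dom, (∃ y : O, T = star y * y) → ∃ y : O, E T = star y * y
  bimod : ∀ c ∈ C, ∀ c' ∈ C, ∀ T ∈ dom, E (c * T * c') = c * E T * c'
  contractive : ∀ T ∈ dom, ‖E T‖ ≤ ‖T‖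

/-- A map between complex *-algebras is completely positive if all its matrix
amplifications map positive elements to positive elements. -/
def IsCompletelyPositive {B C : Type*} [Ring B] [StarRing B] [Ring C] [StarRing C]
    (f : B → C) : Prop :=
  ∀ (m : ℕ) (bM : Matrix (Fin m) (Fin m) B),
    (∃ c : Matrix (Fin m) (Fin m) B, bM = star c * c) →
    ∃ c : Matrix (Fin m) (Fin m) C, bM.map f = star c * c

/-- Nuclearity of a C*-algebra: the identity map can be approximated in the point-norm
topology by completely positive contractions factoring through matrix algebras. -/
def IsNuclear (B : Type*) [CStarAlgebra B] : Prop :=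
  ∀ (s : Finset B) (ε : ℝ), 0 < ε →
    ∃ (m : ℕ) (φ : B →ₗ[ℂ] (EuclideanSpace ℂ (Fin m) →L[ℂ] EuclideanSpace ℂ (Fin m)))
      (ψ : (EuclideanSpace ℂ (Fin m) →L[ℂ] EuclideanSpace ℂ (Fin m)) →ₗ[ℂ] B),
      IsCompletelyPositive (⇑φ) ∧ IsCompletelyPositive (⇑ψ) ∧
      (∀ b, ‖φ b‖ ≤ ‖b‖) ∧ (∀ T, ‖ψ T‖ ≤ ‖T‖) ∧
      ∀ b ∈ s, ‖ψ (φ b) - b‖ < ε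

/-! ### The power trick -/

/-- The limiting step of the power trick: the missing power of `q` and the constant `C` are
negligible against the growth of `2 ^ k`. -/
lemma le_of_forall_pow_two_pow_le {p q C : ℝ} (hq : 0 ≤ q)
    (h : ∀ k : ℕ, 1 ≤ k → p ^ 2 ^ k ≤ C * q ^ (2 ^ k - 1)) : p ≤ q := by
  by_contra! hlt
  have hp0 : 0 < p := lt_of_le_of_lt hq hlt
  have h1 : Filter.Tendsto (fun m : ℕ => C * (q / p) ^ m) Filter.atTop (nhds (C * 0)) :=
    (tendsto_pow_atTop_nhds_zero_of_lt_one (by positivity) ((div_lt_one hp0).2 hlt)).const_mul C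
  have hexp : Filter.Tendsto (fun k : ℕ => 2 ^ k - 1) Filter.atTop Filter.atTop :=
    Filter.tendsto_atTop_mono (fun k => Nat.le_sub_one_of_lt k.lt_two_pow_self) Filter.tendsto_id
  have h2 := h1.comp hexp
  rw [mul_zero] at h2
  obtain ⟨k, hk, hk1⟩ := ((h2.eventually_lt_const hp0).and (Filter.eventually_ge_atTop 1)).exists
  have h3 := h k hk1
  have h4 : p ^ 2 ^ k = p * p ^ (2 ^ k - 1) := by
    rw [← pow_succ', Nat.sub_add_cancel Nat.one_le_two_pow]
  have h5 : C * q ^ (2 ^ k - 1) < p * p ^ (2 ^ k - 1) := by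
    have h6 := mul_lt_mul_of_pos_right hk (pow_pos hp0 (2 ^ k - 1))
    simpa [div_pow, mul_assoc, div_mul_cancel₀ _ (pow_pos hp0 (2 ^ k - 1)).ne'] using h6
  linarith

/-! ### Uniqueness of the C*-norm -/

section Uniqueness

variable {B : Type*} [CStarAlgebra B] {N : B → ℝ}

lemma IsCStarNorm.sum_le (hN : IsCStarNorm N) {ι : Type*} (s : Finset ι) (f : ι → B) :
    N (∑ i ∈ s, f i) ≤ ∑ i ∈ s, N (f i) := by
  classical
  induction s using Finset.induction_on with
  | empty => simp [(hN.eq_zero 0).2 rfl]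
  | insert a s ha ih =>
    rw [Finset.sum_insert ha, Finset.sum_insert ha]
    exact (hN.add_le _ _).trans (by gcongr)

lemma IsCStarNorm.unitary_le_one (hN : IsCStarNorm N) (u : unitary B) : N (u : B) ≤ 1 := by
  have h1 := hN.cstar 1
  have h2 := hN.cstar (u : B)
  rw [Unitary.coe_star_mul_self] at h2
  rw [star_one, one_mul] at h1
  have h3 := hN.nonneg 1
  have h4 : N 1 ≤ 1 := by
    by_contra! h
    nlinarith
  exact (sq_le_one_iff₀ (hN.nonneg _)).1 (h2 ▸ h4)

/-- Every element is a combination of four unitaries with coefficients at most `‖x‖ / 2`. -/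
lemma IsCStarNorm.le_two_mul_norm (hN : IsCStarNorm N) (b : B) : N b ≤ 2 * ‖b‖ := by
  obtain ⟨u, c, h, hc⟩ := CStarAlgebra.exists_sum_four_unitary b
  calc N b = N (∑ i, c i • (u i : B)) := by rw [← h]
    _ ≤ ∑ i, N (c i • (u i : B)) := hN.sum_le _ _
    _ ≤ ∑ _i : Fin 4, ‖b‖ / 2 := Finset.sum_le_sum fun i _ => by
        rw [hN.smul_eq]
        calc ‖c i‖ * N (u i : B) ≤ ‖c i‖ * 1 := by
              gcongr
              exact hN.unitary_le_one _
          _ ≤ ‖b‖ / 2 := by simpa using hc i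
    _ = 2 * ‖b‖ := by simp; ring

lemma IsCStarNorm.pow_two_pow (hN : IsCStarNorm N) {h : B} (hh : IsSelfAdjoint h) (k : ℕ) :
    N (h ^ 2 ^ k) = N h ^ 2 ^ k := by
  induction k with
  | zero => simp
  | succ k ih =>
    have := hN.cstar (h ^ 2 ^ k)
    rw [(hh.pow _).star_eq, ih] at this
    rw [pow_succ, pow_mul, pow_mul, sq (h ^ 2 ^ k), this]

lemma IsCStarNorm.le_norm_of_isSelfAdjoint (hN : IsCStarNorm N) {h : B} (hh : IsSelfAdjoint h) :
    N h ≤ ‖h‖ := by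
  refine le_of_forall_pow_two_pow_le (C := 2 * ‖h‖) (norm_nonneg _) fun k _ => ?_
  rw [← hN.pow_two_pow hh, mul_assoc, ← pow_succ', Nat.sub_add_cancel Nat.one_le_two_pow,
    ← hh.norm_pow_two_pow]
  exact hN.le_two_mul_norm _

/-- A number `μ` strictly between `N (b* b)` and `‖b* b‖` is impossible: for `h = b* b`, the element
`c = (h - μ)₊` is nonzero, and `c = g h c` with `g = max(h, μ)⁻¹` of norm at most `μ⁻¹` forces
`N c ≤ μ⁻¹ N(h) N(c) < N c`. -/
lemma IsCStarNorm.norm_star_mul_self_le (hN : IsCStarNorm N) (b : B) :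
    ‖star b * b‖ ≤ N (star b * b) := by
  obtain _ | _ := subsingleton_or_nontrivial B
  · rw [Subsingleton.elim (star b * b) 0, norm_zero]
    exact hN.nonneg 0
  let _ := CStarAlgebra.spectralOrder B
  have := CStarAlgebra.spectralOrderedRing B
  set h := star b * b with hdef
  have hh : IsSelfAdjoint h := IsSelfAdjoint.star_mul_self b
  by_contra! hlt
  obtain ⟨μ, h1, h2⟩ := exists_between hlt
  have hμ : 0 < μ := (hN.nonneg _).trans_lt h1
  have hmax : ∀ t : ℝ, 0 < max t μ := fun t => lt_max_of_lt_right hμ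
  have hcont : Continuous fun t : ℝ => (max t μ)⁻¹ :=
    (continuous_id.max continuous_const).inv₀ fun t => (hmax t).ne'
  have hcont2 : Continuous fun t : ℝ => max 0 (t - μ) := by fun_prop
  set c := cfc (fun t : ℝ => max 0 (t - μ)) h with hc
  set g := cfc (fun t : ℝ => (max t μ)⁻¹) h with hg
  have hgsa : IsSelfAdjoint g := cfc_predicate _ _
  have hgn : N g ≤ μ⁻¹ := (hN.le_norm_of_isSelfAdjoint hgsa).trans <|
    norm_cfc_le (by positivity) fun t _ => by
      rw [Real.norm_eq_abs, abs_of_pos (inv_pos.2 (hmax t))]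
      exact inv_anti₀ hμ (le_max_right _ _)
  have hfac : c = g * h * c := by
    conv_rhs => rw [hg, hc]
    conv_rhs => enter [1, 2]; rw [← cfc_id' ℝ h]
    rw [← cfc_mul (fun t : ℝ => (max t μ)⁻¹) (fun t => t) h hcont.continuousOn
        continuous_id.continuousOn,
      ← cfc_mul (fun t : ℝ => (max t μ)⁻¹ * t) _ h (hcont.mul continuous_id).continuousOn hcont2.continuousOn, hc]
    congr 1
    funext t
    rcases le_total t μ with ht | ht
    · simp [max_eq_left (sub_nonpos.2 ht)]
    · have : t ≠ 0 := (hμ.trans_le ht).ne'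
      simp [max_eq_left ht, this]
  have hc0 : c ≠ 0 := by
    intro h0
    have hmem : ‖h‖ ∈ spectrum ℝ h :=
      CStarAlgebra.norm_mem_spectrum_of_nonneg (star_mul_self_nonneg b)
    have h3 := norm_apply_le_norm_cfc (fun t : ℝ => max 0 (t - μ)) h hmem hcont2.continuousOn hh
    rw [← hc, h0, norm_zero, norm_le_zero_iff] at h3
    have := le_max_right 0 (‖h‖ - μ)
    linarith
  have hNc : 0 < N c := lt_of_le_of_ne (hN.nonneg _) fun h0 => hc0 ((hN.eq_zero c).1 h0.symm)
  have h4 : N c ≤ μ⁻¹ * N h * N c := calc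
    N c = N (g * h * c) := by rw [← hfac]
    _ ≤ N g * N h * N c :=
      (hN.mul_le _ _).trans (mul_le_mul_of_nonneg_right (hN.mul_le _ _) hNc.le)
    _ ≤ μ⁻¹ * N h * N c := by
      have := hN.nonneg h
      gcongr
  have h5 : μ⁻¹ * N h < 1 := by rw [inv_mul_lt_one₀ hμ]; exact h1
  nlinarith

/-- A complete C*-norm is the only C*-norm. -/
lemma IsCStarNorm.eq_norm (hN : IsCStarNorm N) (b : B) : N b = ‖b‖ := by
  have h1 : N (star b * b) = ‖star b * b‖ :=
    (hN.le_norm_of_isSelfAdjoint (IsSelfAdjoint.star_mul_self b)).antisymm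
      (hN.norm_star_mul_self_le b)
  rw [hN.cstar, CStarRing.norm_star_mul_self, ← sq] at h1
  exact (pow_left_inj₀ (hN.nonneg _) (norm_nonneg _) two_ne_zero).1 h1

end Uniqueness

/-! ### Finite-rank operators on a right Hilbert module -/

namespace RightHilbertModule

variable {A : Type*} [CStarAlgebra A] {X : Type*} [NormedAddCommGroup X] [NormedSpace ℂ X]
  (M : RightHilbertModule A X)

/-- The bounded map `z ↦ (x|z)`. -/
def innerL (x : X) : X →L[ℂ] A :=
  LinearMap.mkContinuous
    { toFun := M.inner x
      map_add' := M.inner_add_right x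
      map_smul' := fun c z => M.inner_smulC_right c x z } ‖x‖ (M.norm_inner_le x)

/-- The bounded map `a ↦ x a`. -/
def rsmulL (x : X) : A →L[ℂ] X :=
  LinearMap.mkContinuous
    { toFun := M.rsmul x
      map_add' := M.rsmul_addA x
      map_smul' := fun c a => M.rsmul_smulC' c x a } ‖x‖ (M.norm_rsmul_le x)

@[simp] lemma innerL_apply (x z : X) : M.innerL x z = M.inner x z := rfl

@[simp] lemma rsmulL_apply (x : X) (a : A) : M.rsmulL x a = M.rsmul x a := rfl

lemma inner_sum_right {ι : Type*} (s : Finset ι) (x : X) (f : ι → X) :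
    M.inner x (∑ i ∈ s, f i) = ∑ i ∈ s, M.inner x (f i) := map_sum (M.innerL x) f s

lemma rsmul_sum {ι : Type*} (s : Finset ι) (x : X) (f : ι → A) :
    M.rsmul x (∑ i ∈ s, f i) = ∑ i ∈ s, M.rsmul x (f i) := map_sum (M.rsmulL x) f s

lemma inner_sum_left {ι : Type*} (s : Finset ι) (x : X) (f : ι → X) :
    M.inner (∑ i ∈ s, f i) x = ∑ i ∈ s, M.inner (f i) x := by
  rw [← M.star_inner, inner_sum_right, star_sum]
  simp only [M.star_inner]

lemma inner_rsmul_left (x y : X) (a : A) : M.inner (M.rsmul x a) y = star a * M.inner x y := by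
  rw [← M.star_inner, M.inner_rsmul_right, star_mul, M.star_inner]

variable {n : ℕ}

/-- The operator `∑ᵢⱼ θ_{yᵢ Pᵢⱼ, yⱼ}`, that is `z ↦ ∑ᵢⱼ yᵢ Pᵢⱼ (yⱼ|z)`. -/
def finRank (y : Fin n → X) (P : CStarMatrix (Fin n) (Fin n) A) : X →L[ℂ] X :=
  ∑ i, ∑ j, (M.rsmulL (y i)).comp ((ContinuousLinearMap.mul ℂ A (P i j)).comp (M.innerL (y j)))

lemma finRank_apply (y : Fin n → X) (P : CStarMatrix (Fin n) (Fin n) A) (z : X) :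
    M.finRank y P z = ∑ i, ∑ j, M.rsmul (y i) (P i j * M.inner (y j) z) := by
  simp [finRank]

/-- The Gram matrix `((xᵢ|xⱼ))ᵢⱼ`. -/
def gram (x : Fin n → X) : CStarMatrix (Fin n) (Fin n) A :=
  CStarMatrix.ofMatrix (Matrix.of fun i j => M.inner (x i) (x j))

lemma gram_apply (x : Fin n → X) (i j : Fin n) : M.gram x i j = M.inner (x i) (x j) := rfl

lemma finRank_mul (y : Fin n → X) (P Q : CStarMatrix (Fin n) (Fin n) A) :
    M.finRank y P * M.finRank y Q = M.finRank y (P * M.gram y * Q) := by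
  ext z
  rw [mul_apply_eq_comp, finRank_apply _ _ P, finRank_apply _ _ Q, finRank_apply]
  refine Finset.sum_congr rfl fun i _ => ?_
  rw [← rsmul_sum, ← rsmul_sum]
  congr 1
  simp only [inner_sum_right, M.inner_rsmul_right, CStarMatrix.mul_apply, Finset.sum_mul,
    Finset.mul_sum, gram_apply, mul_assoc]
  rw [Finset.sum_comm]
  conv_rhs => rw [Finset.sum_comm]
  exact Finset.sum_congr rfl fun k _ => Finset.sum_comm

lemma finRank_pow (y : Fin n → X) (P : CStarMatrix (Fin n) (Fin n) A) (m : ℕ) :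
    M.finRank y P ^ (m + 1) = M.finRank y ((P * M.gram y) ^ m * P) := by
  induction m with
  | zero => simp
  | succ m ih => rw [pow_succ', ih, finRank_mul, pow_succ' (P * M.gram y), mul_assoc _ _ P]

/-- The Cauchy–Schwarz inequality gives `‖R‖² ≤ ‖R²‖` for symmetric `R`; apply this to the powers
of `S`. -/
lemma norm_pow_two_pow_of_symm (S : X →L[ℂ] X)
    (hS : ∀ u v, M.inner (S u) v = M.inner u (S v)) (k : ℕ) : ‖S ^ 2 ^ k‖ = ‖S‖ ^ 2 ^ k := by
  have hsq : ∀ R : X →L[ℂ] X, (∀ u v, M.inner (R u) v = M.inner u (R v)) → ‖R‖ ^ 2 ≤ ‖R ^ 2‖ := by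
    intro R hR
    rw [← Real.le_sqrt (norm_nonneg _) (norm_nonneg _)]
    refine R.opNorm_le_bound (Real.sqrt_nonneg _) fun z => ?_
    refine abs_le_of_sq_le_sq' ?_ (by positivity) |>.2
    rw [M.norm_sq_eq, hR, mul_pow, Real.sq_sqrt (norm_nonneg _)]
    have h1 : ‖R (R z)‖ ≤ ‖R ^ 2‖ * ‖z‖ := by
      rw [← mul_apply_eq_comp, ← sq]
      exact (R ^ 2).le_opNorm z
    calc _ ≤ ‖z‖ * ‖R (R z)‖ := M.norm_inner_le _ _
      _ ≤ ‖z‖ * (‖R ^ 2‖ * ‖z‖) := by gcongr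
      _ = _ := by ring
  have hpow : ∀ m u v, M.inner ((S ^ m) u) v = M.inner u ((S ^ m) v) := by
    intro m
    induction m with
    | zero => simp
    | succ m ih =>
      intro u v
      rw [pow_succ, mul_apply_eq_comp, ih, hS, ← mul_apply_eq_comp,
        ← pow_succ', pow_succ]
  induction k with
  | zero => simp
  | succ k ih =>
    have h1 := hsq _ (hpow (2 ^ k))
    have h2 := sq (S ^ 2 ^ k) ▸ norm_mul_le (S ^ 2 ^ k) (S ^ 2 ^ k)
    rw [pow_succ, pow_mul, pow_mul, ← ih]
    exact le_antisymm (by rwa [← sq ‖_‖] at h2) h1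

variable [PartialOrder A] [StarOrderedRing A]

lemma exists_norm_finRank_le (y : Fin n → X) :
    ∃ C : ℝ, 0 ≤ C ∧ ∀ P : CStarMatrix (Fin n) (Fin n) A, ‖M.finRank y P‖ ≤ C * ‖P‖ := by
  refine ⟨∑ i, ∑ j, ‖M.rsmulL (y i)‖ * ‖M.innerL (y j)‖, by positivity, fun P => ?_⟩
  rw [finRank, Finset.sum_mul]
  refine (norm_sum_le _ _).trans (Finset.sum_le_sum fun i _ => ?_)
  rw [Finset.sum_mul]
  refine (norm_sum_le _ _).trans (Finset.sum_le_sum fun j _ => ?_)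
  calc _ ≤ ‖M.rsmulL (y i)‖ * (‖ContinuousLinearMap.mul ℂ A (P i j)‖ * ‖M.innerL (y j)‖) :=
        (ContinuousLinearMap.opNorm_comp_le _ _).trans <| by
          gcongr
          exact ContinuousLinearMap.opNorm_comp_le _ _
    _ ≤ ‖M.rsmulL (y i)‖ * (‖P‖ * ‖M.innerL (y j)‖) := by
        gcongr
        exact (ContinuousLinearMap.opNorm_mul_apply_le ℂ A _).trans CStarMatrix.norm_entry_le_norm
    _ = _ := by ring

/-- The matrix `((yᵢ|S yⱼ))ᵢⱼ` depends continuously on `S`; at `S = finRank y P` it equals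
`G_y P G_y`. -/
lemma exists_norm_gram_mul_mul_gram_le (y : Fin n → X) :
    ∃ C : ℝ, 0 ≤ C ∧ ∀ P : CStarMatrix (Fin n) (Fin n) A,
      ‖M.gram y * P * M.gram y‖ ≤ C * ‖M.finRank y P‖ := by
  let ψ : (X →L[ℂ] X) →L[ℂ] CStarMatrix (Fin n) (Fin n) A :=
    { toFun := fun S => CStarMatrix.ofMatrix (Matrix.of fun i j => M.innerL (y i) (S (y j)))
      map_add' := fun S R => by ext i j; exact map_add (M.innerL (y i)) _ _
      map_smul' := fun c S => by ext i j; simp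
      cont := continuous_pi fun i => continuous_pi fun j =>
        (M.innerL (y i)).continuous.comp (ContinuousLinearMap.apply ℂ X (y j)).continuous }
  refine ⟨‖ψ‖, ψ.opNorm_nonneg, fun P => ?_⟩
  have h : M.gram y * P * M.gram y = ψ (M.finRank y P) := by
    ext i j
    change _ = M.inner (y i) (M.finRank y P (y j))
    rw [finRank_apply]
    simp only [inner_sum_right, M.inner_rsmul_right, CStarMatrix.mul_apply, Finset.sum_mul,
      gram_apply, mul_assoc]
    rw [Finset.sum_comm]
  rw [h]
  exact ψ.le_opNorm _

/-- The norm formula with the C*-norm of `CStarMatrix`. With `S = T* T`, of norm `‖T‖²`, and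
`h = (gx gy) (gx gy)*`, of norm `‖gx gy‖²`, `‖S ^ (m + 1)‖` is at most a constant times
`‖h‖ ^ m`, and `‖h ^ (m + 2)‖` at most a constant times `‖S‖ ^ (m + 1)`, so `‖S‖ = ‖h‖`. -/
theorem norm_eq_norm_mul (x y : Fin n → X)
    (T : X →L[ℂ] X) (hT : ∀ z : X, T z = ∑ i, M.rsmul (x i) (M.inner (y i) z))
    (gx gy : CStarMatrix (Fin n) (Fin n) A) (hgx : IsSelfAdjoint gx) (hgy : IsSelfAdjoint gy)
    (hgx_sq : gx * gx = M.gram x) (hgy_sq : gy * gy = M.gram y) :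
    ‖T‖ = ‖gx * gy‖ := by
  set S := M.finRank y (M.gram x) with hS
  -- `S` is the operator `T* T`.
  have hinner : ∀ u v, M.inner (T u) (T v) = M.inner u (S v) := by
    intro u v
    rw [hT, hT, hS, finRank_apply]
    simp only [inner_sum_right, inner_sum_left, M.inner_rsmul_right, inner_rsmul_left,
      M.star_inner, gram_apply, Finset.sum_mul, mul_assoc]
    rw [Finset.sum_comm]
  have hsymm : ∀ u v, M.inner (S u) v = M.inner u (S v) := by
    intro u v
    rw [← hinner, ← M.star_inner, ← hinner, M.star_inner]
  have hST : ‖S‖ = ‖T‖ ^ 2 := by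
    apply le_antisymm
    · refine S.opNorm_le_bound (by positivity) fun z => ?_
      have h1 : ‖S z‖ ^ 2 ≤ (‖T‖ * ‖S z‖) * (‖T‖ * ‖z‖) := by
        rw [M.norm_sq_eq, ← hinner]
        exact (M.norm_inner_le _ _).trans (by gcongr <;> exact T.le_opNorm _)
      rcases (norm_nonneg (S z)).eq_or_lt with h0 | h0
      · rw [← h0]; positivity
      · refine le_of_mul_le_mul_left ?_ h0
        calc ‖S z‖ * ‖S z‖ = ‖S z‖ ^ 2 := by ring
          _ ≤ _ := h1
          _ = _ := by ring
    · rw [← Real.le_sqrt (norm_nonneg _) (norm_nonneg _)]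
      refine T.opNorm_le_bound (Real.sqrt_nonneg _) fun z => ?_
      refine abs_le_of_sq_le_sq' ?_ (by positivity) |>.2
      rw [M.norm_sq_eq, hinner, mul_pow, Real.sq_sqrt (norm_nonneg _)]
      calc _ ≤ ‖z‖ * ‖S z‖ := M.norm_inner_le _ _
        _ ≤ ‖z‖ * (‖S‖ * ‖z‖) := by gcongr; exact S.le_opNorm z
        _ = _ := by ring
  set h := gx * M.gram y * gx with hh
  have hh' : h = (gx * gy) * star (gx * gy) := by
    rw [star_mul, hgx.star_eq, hgy.star_eq, hh, ← hgy_sq]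
    simp only [mul_assoc]
  have hhsa : IsSelfAdjoint h := hh' ▸ IsSelfAdjoint.mul_star_self _
  have hhn : ‖h‖ = ‖gx * gy‖ ^ 2 := by rw [hh', CStarRing.norm_self_mul_star, sq]
  have hmove : ∀ m : ℕ, (M.gram x * M.gram y) ^ m * M.gram x = gx * h ^ m * gx := by
    intro m
    induction m with
    | zero => simp [hgx_sq]
    | succ m ih =>
      rw [pow_succ', mul_assoc, ih, pow_succ', hh, ← hgx_sq]
      simp only [mul_assoc]
  have hSh : ‖S‖ = ‖h‖ := by
    apply le_antisymm
    · obtain ⟨C, hC, hb⟩ := M.exists_norm_finRank_le y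
      refine le_of_forall_pow_two_pow_le (C := C * (‖gx‖ * ‖gx‖)) (norm_nonneg _)
        fun k hk => ?_
      rw [← M.norm_pow_two_pow_of_symm S hsymm]
      obtain ⟨m, hm, hm0⟩ : ∃ m, 2 ^ k = m + 1 ∧ 0 < m := by
        refine ⟨2 ^ k - 1, ?_⟩
        have : 2 ^ 1 ≤ 2 ^ k := Nat.pow_le_pow_right two_pos hk
        omega
      rw [hm, Nat.add_sub_cancel, hS, finRank_pow, hmove]
      calc _ ≤ C * ‖gx * h ^ m * gx‖ := hb _
        _ ≤ C * (‖gx‖ * ‖h‖ ^ m * ‖gx‖) := by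
          gcongr
          refine (norm_mul_le _ _).trans ?_
          gcongr
          exact (norm_mul_le _ _).trans (by gcongr; exact norm_pow_le' h hm0)
        _ = _ := by ring
    · obtain ⟨C, hC, hb⟩ := M.exists_norm_gram_mul_mul_gram_le y
      refine le_of_forall_pow_two_pow_le (C := ‖gx‖ * C * ‖gx‖) (norm_nonneg _)
        fun k hk => ?_
      rw [← hhsa.norm_pow_two_pow]
      obtain ⟨m, hm⟩ : ∃ m, 2 ^ k = m + 2 := by
        refine ⟨2 ^ k - 2, ?_⟩
        have : 2 ^ 1 ≤ 2 ^ k := Nat.pow_le_pow_right two_pos hk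
        omega
      have hpow : h ^ (m + 2) =
          gx * (M.gram y * ((M.gram x * M.gram y) ^ m * M.gram x) * M.gram y) * gx := by
        rw [hmove, pow_succ, pow_succ', hh]
        simp only [mul_assoc]
      rw [hm, show m + 2 - 1 = m + 1 from rfl, hpow]
      calc _ ≤ ‖gx‖ * (C * ‖S ^ (m + 1)‖) * ‖gx‖ := by
            refine (norm_mul_le _ _).trans ?_
            gcongr
            refine (norm_mul_le _ _).trans ?_
            gcongr
            rw [hS, finRank_pow]
            exact hb _
        _ ≤ ‖gx‖ * (C * ‖S‖ ^ (m + 1)) * ‖gx‖ := by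
            gcongr
            exact norm_pow_le' S m.succ_pos
        _ = _ := by ring
  rw [hST, hhn] at hSh
  exact (pow_left_inj₀ (norm_nonneg _) (norm_nonneg _) two_ne_zero).1 hSh

end RightHilbertModule

/-- A C*-algebra as a right Hilbert module over itself, with `(a|b) = a* b`. -/
def selfModule (A : Type*) [CStarAlgebra A] : RightHilbertModule A A where
  rsmul x a := x * a
  inner x y := star x * y
  rsmul_add := add_mul
  rsmul_addA := mul_add
  rsmul_mul := mul_assoc
  rsmul_one := mul_one
  rsmul_smulC := smul_mul_assoc
  rsmul_smulC' c x a := mul_smul_comm c x a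
  inner_add_right _ := mul_add _
  inner_smulC_right c x y := mul_smul_comm c _ y
  inner_rsmul_right _ _ _ := (mul_assoc _ _ _).symm
  star_inner x y := by simp
  inner_self_pos x := ⟨x, rfl⟩
  inner_self_eq_zero h := (CStarRing.star_mul_self_eq_zero_iff _).1 h
  norm_sq_eq x := by rw [CStarRing.norm_star_mul_self, sq]
  norm_inner_le x y := (norm_mul_le _ _).trans (by rw [norm_star])
  norm_rsmul_le := norm_mul_le

/-- Lemma 2.1: the norm of the finite-rank operator `Σᵢ θ_{xᵢ,yᵢ}` on a
right Hilbert `A`-module equals the norm in `Mₙ(A)` of the product `Gx^{1/2} Gy^{1/2}` of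
the positive square roots of the Gram matrices; in particular, for elements of `A`,
`‖Σᵢ xᵢ yᵢ*‖ = ‖((xᵢ* xⱼ)ᵢⱼ)^{1/2} ((yᵢ* yⱼ)ᵢⱼ)^{1/2}‖` in `Mₙ(A)`. -/
theorem statement0 {A : Type*} [CStarAlgebra A] {X : Type*}
    [NormedAddCommGroup X] [NormedSpace ℂ X] (M : RightHilbertModule A X)
    {n : ℕ} (x y : Fin n → X)
    (T : X →L[ℂ] X) (hT : ∀ z : X, T z = ∑ i, M.rsmul (x i) (M.inner (y i) z))
    (NA : Matrix (Fin n) (Fin n) A → ℝ) (hNA : IsCStarNorm NA)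
    (gx gy : Matrix (Fin n) (Fin n) A)
    (hgx_pos : ∃ c : Matrix (Fin n) (Fin n) A, gx = star c * c)
    (hgy_pos : ∃ c : Matrix (Fin n) (Fin n) A, gy = star c * c)
    (hgx_sq : gx * gx = Matrix.of fun i j => M.inner (x i) (x j))
    (hgy_sq : gy * gy = Matrix.of fun i j => M.inner (y i) (y j)) :
    ‖T‖ = NA (gx * gy) ∧
    ∀ (v w : Fin n → A) (hx hy : Matrix (Fin n) (Fin n) A),
      (∃ c : Matrix (Fin n) (Fin n) A, hx = star c * c) →
      (∃ c : Matrix (Fin n) (Fin n) A, hy = star c * c) →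
      hx * hx = Matrix.of (fun i j => star (v i) * v j) →
      hy * hy = Matrix.of (fun i j => star (w i) * w j) →
      ‖∑ i, v i * star (w i)‖ = NA (hx * hy) := by
  let _ := CStarAlgebra.spectralOrder A
  have := CStarAlgebra.spectralOrderedRing A
  have hN : IsCStarNorm (B := CStarMatrix (Fin n) (Fin n) A) NA :=
    { nonneg := hNA.nonneg
      eq_zero := hNA.eq_zero
      add_le := hNA.add_le
      smul_eq := hNA.smul_eq
      mul_le := hNA.mul_le
      cstar := hNA.cstar }
  have hsa : ∀ g : CStarMatrix (Fin n) (Fin n) A,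
      (∃ c : CStarMatrix (Fin n) (Fin n) A, g = star c * c) → IsSelfAdjoint g := by
    rintro _ ⟨c, rfl⟩
    exact IsSelfAdjoint.star_mul_self c
  refine ⟨?_, fun v w hx hy hx_pos hy_pos hx_sq hy_sq => ?_⟩
  · exact (M.norm_eq_norm_mul x y T hT gx gy (hsa gx hgx_pos) (hsa gy hgy_pos) hgx_sq hgy_sq).trans
      (hN.eq_norm _).symm
  -- Left multiplication by `∑ᵢ vᵢ wᵢ*` is `∑ᵢ θ_{vᵢ,wᵢ}` on `A` and has the same norm.
  · have h := (selfModule A).norm_eq_norm_mul v w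
      (ContinuousLinearMap.mul ℂ A (∑ i, v i * star (w i)))
      (fun z => by simp [selfModule, mul_assoc])
      hx hy (hsa hx hx_pos) (hsa hy hy_pos) hx_sq hy_sq
    rw [ContinuousLinearMap.opNorm_mul_apply] at h
    exact h.trans (hN.eq_norm _).symm
end
end

section
/- Let A and D be unital C*-algebras, let X and Y be finite projective right Hilbert A-modules, let π_A : A → D be a unital *-homomorphism, and let π_X : X → D, π_Y : Y → D be linear maps satisfying π_X(xa) = π_X(x)π_A(a), π_X(x)*π_X(x') = π_A((x|x')_A) for x, x' ∈ X, a ∈ A, and likewise for Y. Then there is a unique linear contraction π : K_A(X,Y) → D such that π(θ_{y,x}) = π_Y(y)π_X(x)* for all x ∈ X, y ∈ Y, and it satisfies π_Y(kx) = π(k)π_X(x) for all k ∈ K_A(X,Y), x ∈ X; these maps are compatible with composition and adjoints of adjointable operators. Moreover, if π_A is injective, then π is isometric and π_X, π_Y are isometries. -/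
/-!
Fix a basis `u` of `X`. An adjointable operator `k : X → Y` is `A`-linear, so it is the finite sum
`∑ i, θ_{k uᵢ, uᵢ}`, and the only possible extension is `π k = ∑ i, π_Y (k uᵢ) π_X (uᵢ)*`.
The basis expansion gives `π k * π_X x = π_Y (k x)`; in particular `∑ i, π_X (uᵢ) π_X (uᵢ)*` is a
unit for every `π_X x`. Independence of the basis (hence the value on rank-one operators),
multiplicativity and compatibility with adjoints follow from these two facts.

For contractivity, the defining formula gives the crude bound `‖π k‖ ≤ C ‖k‖` with
`C = ∑ i, ‖uᵢ‖ ^ 2`. Applied to the powers `(k* k) ^ (2 ^ n)`, together with the C*-identity for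
the self-adjoint element `π (k* k) = (π k)* π k`, it yields
`‖π k‖ ^ 2 ≤ C ^ (1 / 2 ^ n) ‖k* k‖` for all `n`, so `‖π k‖ ^ 2 ≤ ‖k* k‖ ≤ ‖k‖ ^ 2`.

If `π_A` is injective it is isometric, hence so are `π_X` and `π_Y`, and
`‖k x‖ = ‖π_Y (k x)‖ = ‖π k * π_X x‖ ≤ ‖π k‖ ‖x‖`.
-/


noncomputable section

universe uO

open scoped BigOperators

/-! ### Adjointable operators and rank-one operators -/

section Extension

variable {A : Type*} [CStarAlgebra A] {X Y Z : Type*}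
  [NormedAddCommGroup X] [NormedSpace ℂ X] [NormedAddCommGroup Y] [NormedSpace ℂ Y]
  [NormedAddCommGroup Z] [NormedSpace ℂ Z]
  {M : RightHilbertModule A X} {N : RightHilbertModule A Y} {L : RightHilbertModule A Z}

theorem RightHilbertModule.ext_inner (M : RightHilbertModule A X) {p q : X}
    (h : ∀ x, M.inner x p = M.inner x q) : p = q := by
  have h0 : M.inner (p - q) (p - q) = 0 := by
    have e : p - q = p + (-1 : ℂ) • q := by simp [sub_eq_add_neg]
    conv_lhs => arg 3; rw [e]
    rw [M.inner_add_right, M.inner_smulC_right, h]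
    simp
  exact sub_eq_zero.mp (M.inner_self_eq_zero h0)

theorem RightHilbertModule.inner_rsmul_left_s1 (M : RightHilbertModule A X) (x y : X) (a : A) :
    M.inner (M.rsmul x a) y = star a * M.inner x y := by
  rw [← M.star_inner, M.inner_rsmul_right, star_mul, M.star_inner]

theorem Adjointable.inner_right (k : Adjointable M N) (y : Y) (x : X) :
    N.inner y (k.toFun x) = M.inner (k.adjFun y) x :=
  (k.flip.inner_adj y x).symm

theorem Adjointable.map_rsmul (k : Adjointable M N) (x : X) (a : A) :
    k.toFun (M.rsmul x a) = N.rsmul (k.toFun x) a := by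
  apply N.ext_inner
  intro y
  rw [k.inner_right, M.inner_rsmul_right, N.inner_rsmul_right, k.inner_right]

theorem Adjointable.norm_adjFun_le (k : Adjointable M N) : ‖k.adjFun‖ ≤ ‖k.toFun‖ := by
  refine ContinuousLinearMap.opNorm_le_bound _ (norm_nonneg _) fun y => ?_
  have h : ‖k.adjFun y‖ ^ 2 ≤ (‖k.toFun‖ * ‖y‖) * ‖k.adjFun y‖ := by
    rw [M.norm_sq_eq, ← k.inner_adj]
    calc _ ≤ ‖k.toFun (k.adjFun y)‖ * ‖y‖ := N.norm_inner_le _ _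
      _ ≤ (‖k.toFun‖ * ‖k.adjFun y‖) * ‖y‖ := by gcongr; exact k.toFun.le_opNorm _
      _ = _ := by ring
  rcases (norm_nonneg (k.adjFun y)).eq_or_lt with h0 | h0
  · rw [← h0]; positivity
  · rw [sq] at h
    exact le_of_mul_le_mul_right h h0

/-- The map `z ↦ y (x|z)` as a bounded operator. -/
def rankOneCLM (M : RightHilbertModule A X) (N : RightHilbertModule A Y) (y : Y) (x : X) :
    X →L[ℂ] Y :=
  LinearMap.mkContinuous
    { toFun := fun z => N.rsmul y (M.inner x z)
      map_add' := fun z z' => by rw [M.inner_add_right, N.rsmul_addA]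
      map_smul' := fun c z => by rw [M.inner_smulC_right, N.rsmul_smulC', RingHom.id_apply] }
    (‖y‖ * ‖x‖) fun z => by
      calc _ ≤ ‖y‖ * ‖M.inner x z‖ := N.norm_rsmul_le _ _
        _ ≤ ‖y‖ * (‖x‖ * ‖z‖) := by gcongr; exact M.norm_inner_le _ _
        _ = _ := by ring

theorem rankOneCLM_apply (y : Y) (x z : X) :
    rankOneCLM M N y x z = N.rsmul y (M.inner x z) := rfl

namespace Adjointable

/-- The rank-one operator `θ_{y,x}`, with adjoint `θ_{x,y}`. -/
def rankOne (M : RightHilbertModule A X) (N : RightHilbertModule A Y) (y : Y) (x : X) :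
    Adjointable M N where
  toFun := rankOneCLM M N y x
  adjFun := rankOneCLM N M x y
  inner_adj := fun z w => by
    rw [rankOneCLM_apply, rankOneCLM_apply, N.inner_rsmul_left_s1, M.inner_rsmul_right, M.star_inner]

/-- The sum of two adjointable operators. -/
def sum (k k' : Adjointable M N) : Adjointable M N where
  toFun := k.toFun + k'.toFun
  adjFun := k.adjFun + k'.adjFun
  inner_adj := fun z w => by
    rw [← N.star_inner, add_apply, N.inner_add_right, star_add, N.star_inner,
      N.star_inner, add_apply, M.inner_add_right, k.inner_adj, k'.inner_adj]

/-- The iterated square `k ^ (2 ^ n)`. -/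
def sqPow (k : Adjointable M M) : ℕ → Adjointable M M
  | 0 => k
  | n + 1 => (k.sqPow n).comp (k.sqPow n)

theorem norm_sqPow_le (k : Adjointable M M) (n : ℕ) :
    ‖(k.sqPow n).toFun‖ ≤ ‖k.toFun‖ ^ 2 ^ n := by
  induction n with
  | zero => simp [sqPow]
  | succ n ih =>
    calc _ ≤ ‖(k.sqPow n).toFun‖ * ‖(k.sqPow n).toFun‖ :=
          ContinuousLinearMap.opNorm_comp_le _ _
      _ ≤ ‖k.toFun‖ ^ 2 ^ n * ‖k.toFun‖ ^ 2 ^ n := by gcongr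
      _ = _ := by rw [← pow_add, pow_succ, mul_two]

end Adjointable

theorem RightHilbertModule.IsBasis.map_eq {n : ℕ} {u : Fin n → X} (hu : M.IsBasis u)
    (k : Adjointable M N) (x : X) :
    k.toFun x = ∑ i, N.rsmul (k.toFun (u i)) (M.inner (u i) x) := by
  conv_lhs => rw [← hu x, map_sum]
  simp only [k.map_rsmul]

/-! ### Extending representations to operators -/

variable {D : Type*} [CStarAlgebra D] {πA : A →⋆ₐ[ℂ] D} {πX : X → D} {πY : Y → D} {πZ : Z → D}

/-- `πX` represents the right Hilbert module in `D` over the coefficient representation `πA`. -/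
structure RightHilbertModule.Rep (M : RightHilbertModule A X) (πA : A →⋆ₐ[ℂ] D)
    (πX : X → D) : Prop where
  map_add : ∀ x x' : X, πX (x + x') = πX x + πX x'
  map_smul : ∀ (c : ℂ) (x : X), πX (c • x) = c • πX x
  map_rsmul : ∀ (x : X) (a : A), πX (M.rsmul x a) = πX x * πA a
  map_inner : ∀ x y : X, star (πX x) * πX y = πA (M.inner x y)

/-- The extension to operators, `k ↦ ∑ i, π_Y (k uᵢ) π_X (uᵢ)*`. -/
def extendOp {n : ℕ} (u : Fin n → X) (πX : X → D) (πY : Y → D) (k : Adjointable M N) : D :=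
  ∑ i, πY (k.toFun (u i)) * star (πX (u i))

namespace RightHilbertModule.Rep

theorem map_sum (hX : M.Rep πA πX) {ι : Type*} (s : Finset ι) (f : ι → X) :
    πX (∑ i ∈ s, f i) = ∑ i ∈ s, πX (f i) :=
  _root_.map_sum (⟨⟨πX, hX.map_add⟩, hX.map_smul⟩ : X →ₗ[ℂ] D) f s

theorem norm_le (hX : M.Rep πA πX) (x : X) : ‖πX x‖ ≤ ‖x‖ := by
  refine le_of_sq_le_sq ?_ (norm_nonneg _)
  rw [M.norm_sq_eq, sq, ← CStarRing.norm_star_mul_self, hX.map_inner]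
  exact NonUnitalStarAlgHom.norm_apply_le πA _

theorem norm_eq (hX : M.Rep πA πX) (hA : Function.Injective πA) (x : X) : ‖πX x‖ = ‖x‖ := by
  refine (sq_eq_sq₀ (norm_nonneg _) (norm_nonneg _)).mp ?_
  rw [M.norm_sq_eq, sq, ← CStarRing.norm_star_mul_self, hX.map_inner]
  exact NonUnitalStarAlgHom.norm_map πA hA _

variable {n m : ℕ} {u : Fin n → X} {v : Fin m → Y}

theorem extendOp_mul (hX : M.Rep πA πX) (hY : N.Rep πA πY) (hu : M.IsBasis u)
    (k : Adjointable M N) (x : X) : extendOp u πX πY k * πX x = πY (k.toFun x) := by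
  rw [hu.map_eq k x, hY.map_sum, extendOp, Finset.sum_mul]
  simp only [hY.map_rsmul, ← hX.map_inner, mul_assoc]

/-- The support `∑ i, π_X (uᵢ) π_X (uᵢ)*` is a left unit for the image of `π_X`. -/
theorem support_mul (hX : M.Rep πA πX) (hu : M.IsBasis u) (x : X) :
    (∑ i, πX (u i) * star (πX (u i))) * πX x = πX x := by
  conv_rhs => rw [← hu x, hX.map_sum]
  simp only [hX.map_rsmul, ← hX.map_inner, mul_assoc, Finset.sum_mul]

theorem star_mul_support (hX : M.Rep πA πX) (hu : M.IsBasis u) (x : X) :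
    star (πX x) * (∑ i, πX (u i) * star (πX (u i))) = star (πX x) := by
  have h := congrArg star (hX.support_mul hu x)
  simpa [star_sum] using h

theorem extendOp_rankOne (hX : M.Rep πA πX) (hY : N.Rep πA πY) (hu : M.IsBasis u)
    (k : Adjointable M N) (y : Y) (x : X)
    (hk : ∀ z, k.toFun z = N.rsmul y (M.inner x z)) :
    extendOp u πX πY k = πY y * star (πX x) := by
  conv_rhs => rw [← hX.star_mul_support hu x]
  simp only [extendOp, hk, hY.map_rsmul, ← hX.map_inner, Finset.mul_sum, mul_assoc]

theorem extendOp_comp (hX : M.Rep πA πX) (hY : N.Rep πA πY) {w : Fin m → Z}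
    (hu : M.IsBasis u) (k : Adjointable M N) (k' : Adjointable L M) :
    extendOp w πZ πY (k.comp k') = extendOp u πX πY k * extendOp w πZ πX k' := by
  conv_rhs => rw [extendOp.eq_def w, Finset.mul_sum]
  simp only [← mul_assoc, hX.extendOp_mul hY hu]
  rfl

theorem star_extendOp_mul (hX : M.Rep πA πX) (hY : N.Rep πA πY) (hu : M.IsBasis u)
    (k : Adjointable M N) (y : Y) :
    star (extendOp u πX πY k) * πY y = πX (k.adjFun y) := by
  conv_rhs => rw [← hu (k.adjFun y), hX.map_sum]
  simp only [hX.map_rsmul, extendOp, star_sum, star_mul, star_star, Finset.sum_mul, mul_assoc,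
    hY.map_inner, k.inner_adj]

theorem extendOp_flip (hX : M.Rep πA πX) (hY : N.Rep πA πY) (hu : M.IsBasis u)
    (hv : N.IsBasis v) (k : Adjointable M N) :
    extendOp v πY πX k.flip = star (extendOp u πX πY k) := by
  have h1 : extendOp v πY πX k.flip =
      star (extendOp u πX πY k) * ∑ j, πY (v j) * star (πY (v j)) := by
    simp only [Finset.mul_sum, ← mul_assoc, hX.star_extendOp_mul hY hu]
    rfl
  -- The range of `π_Y` absorbs its support, and every summand of `π k` starts in that range.
  rw [h1, extendOp, star_sum, Finset.sum_mul]
  simp only [star_mul, mul_assoc, hY.star_mul_support hv]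

/-- A crude bound, with a constant depending on the basis. -/
theorem norm_extendOp_le_const (hX : M.Rep πA πX) (hY : N.Rep πA πY)
    (k : Adjointable M N) :
    ‖extendOp u πX πY k‖ ≤ (∑ i, ‖u i‖ ^ 2) * ‖k.toFun‖ := by
  rw [Finset.sum_mul]
  refine norm_sum_le_of_le _ fun i _ => ?_
  calc _ ≤ ‖πY (k.toFun (u i))‖ * ‖star (πX (u i))‖ := norm_mul_le _ _
    _ = ‖πY (k.toFun (u i))‖ * ‖πX (u i)‖ := by rw [norm_star]
    _ ≤ (‖k.toFun‖ * ‖u i‖) * ‖u i‖ := by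
        gcongr
        · exact (hY.norm_le _).trans (k.toFun.le_opNorm _)
        · exact hX.norm_le _
    _ = _ := by ring

theorem extendOp_sqPow (hX : M.Rep πA πX) (hu : M.IsBasis u) (k : Adjointable M M) (r : ℕ) :
    extendOp u πX πX (k.sqPow r) = extendOp u πX πX k ^ 2 ^ r := by
  induction r with
  | zero => simp [Adjointable.sqPow]
  | succ r ih =>
    rw [Adjointable.sqPow, hX.extendOp_comp hX hu, ih, ← pow_add, pow_succ, mul_two]

end RightHilbertModule.Rep

theorem le_of_forall_two_pow_le {a b C : ℝ} (hb : 0 ≤ b)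
    (h : ∀ r : ℕ, a ^ 2 ^ r ≤ C * b ^ 2 ^ r) : a ≤ b := by
  by_contra! hab
  have ha : 0 < a := hb.trans_lt hab
  have ht : Filter.Tendsto (fun r : ℕ => C * (b / a) ^ 2 ^ r) Filter.atTop (nhds (C * 0)) :=
    ((tendsto_pow_atTop_nhds_zero_of_lt_one (div_nonneg hb ha.le)
      ((div_lt_one ha).mpr hab)).comp
        (tendsto_pow_atTop_atTop_of_one_lt (one_lt_two : (1 : ℕ) < 2))).const_mul C
  have h1 : (1 : ℝ) ≤ C * 0 := ge_of_tendsto' ht fun r => by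
    rw [div_pow, ← mul_div_assoc, le_div_iff₀ (by positivity), one_mul]
    exact h r
  linarith

theorem RightHilbertModule.Rep.norm_extendOp_le {n : ℕ} {u : Fin n → X} (hX : M.Rep πA πX)
    (hY : N.Rep πA πY) {m : ℕ} {v : Fin m → Y} (hu : M.IsBasis u) (hv : N.IsBasis v)
    (k : Adjointable M N) : ‖extendOp u πX πY k‖ ≤ ‖k.toFun‖ := by
  have hS : extendOp u πX πX (k.flip.comp k) =
      star (extendOp u πX πY k) * extendOp u πX πY k := by
    rw [hY.extendOp_comp hX hv, hX.extendOp_flip hY hu hv]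
  have hsa : IsSelfAdjoint (extendOp u πX πX (k.flip.comp k)) := by
    rw [hS]; exact IsSelfAdjoint.star_mul_self _
  have hle : ‖extendOp u πX πX (k.flip.comp k)‖ ≤ ‖(k.flip.comp k).toFun‖ := by
    refine le_of_forall_two_pow_le (C := ∑ i, ‖u i‖ ^ 2) (norm_nonneg _) fun r => ?_
    have hp : ‖extendOp u πX πX (k.flip.comp k)‖ ^ 2 ^ r =
        ‖extendOp u πX πX (k.flip.comp k) ^ 2 ^ r‖ := by
      have := congrArg NNReal.toReal (hsa.nnnorm_pow_two_pow r)
      simpa using this.symm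
    rw [hp, ← hX.extendOp_sqPow hu]
    refine (hX.norm_extendOp_le_const hX _).trans ?_
    gcongr
    exact Adjointable.norm_sqPow_le _ r
  refine le_of_sq_le_sq ?_ (norm_nonneg _)
  calc _ = ‖extendOp u πX πX (k.flip.comp k)‖ := by
        rw [hS, CStarRing.norm_star_mul_self, sq]
    _ ≤ ‖(k.flip.comp k).toFun‖ := hle
    _ ≤ ‖k.adjFun‖ * ‖k.toFun‖ := ContinuousLinearMap.opNorm_comp_le _ _
    _ ≤ ‖k.toFun‖ * ‖k.toFun‖ := by gcongr; exact k.norm_adjFun_le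
    _ = _ := (sq _).symm

/-- An additive map with the prescribed values on rank-one operators is the extension, because
the rank-one operators span all adjointable operators. -/
theorem RightHilbertModule.IsBasis.eq_extendOp {n : ℕ} {u : Fin n → X} (hu : M.IsBasis u)
    (ρ : Adjointable M N → D)
    (hadd : ∀ k k' k'' : Adjointable M N,
      (∀ z, k''.toFun z = k.toFun z + k'.toFun z) → ρ k'' = ρ k + ρ k')
    (hone : ∀ (k : Adjointable M N) (y : Y) (x : X),
      (∀ z, k.toFun z = N.rsmul y (M.inner x z)) → ρ k = πY y * star (πX x))
    (k : Adjointable M N) : ρ k = extendOp u πX πY k := by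
  have zero_val : ∀ k0 : Adjointable M N, (∀ z, k0.toFun z = 0) → ρ k0 = 0 := fun k0 h0 => by
    have h := hadd k0 k0 k0 fun z => by simp [h0]
    exact left_eq_add.mp h
  have key : ∀ s : Finset (Fin n), ∀ ks : Adjointable M N,
      (∀ z, ks.toFun z = ∑ i ∈ s, N.rsmul (k.toFun (u i)) (M.inner (u i) z)) →
      ρ ks = ∑ i ∈ s, πY (k.toFun (u i)) * star (πX (u i)) := by
    intro s
    induction s using Finset.induction_on with
    | empty => intro ks hks; simpa using zero_val ks (by simpa using hks)
    | insert a s ha ih =>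
      intro ks hks
      -- The remaining partial sum is the operator `ks - θ`.
      have hm : ∃ kr : Adjointable M N, ∀ z, kr.toFun z =
          ks.toFun z + (-1 : ℂ) • N.rsmul (k.toFun (u a)) (M.inner (u a) z) := by
        refine ⟨ks.sum (Adjointable.rankOne M N ((-1 : ℂ) • k.toFun (u a)) (u a)), fun z => ?_⟩
        rw [← N.rsmul_smulC]
        rfl
      obtain ⟨kr, hkr⟩ := hm
      have h1 := ih kr fun z => by
        rw [hkr, hks, Finset.sum_insert ha]; simp
      have h2 := hadd (Adjointable.rankOne M N (k.toFun (u a)) (u a)) kr ks fun z => by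
        rw [hkr]; simp [Adjointable.rankOne, rankOneCLM_apply]
      rw [h2, h1, Finset.sum_insert ha, hone _ _ _ fun z => rankOneCLM_apply _ _ z]
  exact key Finset.univ k fun z => hu.map_eq k z

end Extension

/-- Lemma 2.2: representations of finite projective right Hilbert
modules extend uniquely to contractive maps on the spaces of ("compact" = adjointable)
operators, functorially with respect to composition and adjoints, and isometrically
when the coefficient representation is injective. -/
theorem statement1 {A D : Type*} [CStarAlgebra A] [CStarAlgebra D]
    {X Y : Type*} [NormedAddCommGroup X] [NormedSpace ℂ X]
    [NormedAddCommGroup Y] [NormedSpace ℂ Y]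
    (M : RightHilbertModule A X) (N : RightHilbertModule A Y)
    {nx ny : ℕ} (u : Fin nx → X) (v : Fin ny → Y)
    (hu : M.IsBasis u) (hv : N.IsBasis v)
    (πA : A →⋆ₐ[ℂ] D) (πX : X → D) (πY : Y → D)
    (hXadd : ∀ x x' : X, πX (x + x') = πX x + πX x')
    (hXsmul : ∀ (c : ℂ) (x : X), πX (c • x) = c • πX x)
    (hXr : ∀ (x : X) (a : A), πX (M.rsmul x a) = πX x * πA a)
    (hXi : ∀ x x' : X, star (πX x) * πX x' = πA (M.inner x x'))
    (hYadd : ∀ y y' : Y, πY (y + y') = πY y + πY y')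
    (hYsmul : ∀ (c : ℂ) (y : Y), πY (c • y) = c • πY y)
    (hYr : ∀ (y : Y) (a : A), πY (N.rsmul y a) = πY y * πA a)
    (hYi : ∀ y y' : Y, star (πY y) * πY y' = πA (N.inner y y')) :
    ∃ (π : Adjointable M N → D) (π' : Adjointable N M → D)
      (πXX : Adjointable M M → D) (πYY : Adjointable N N → D),
      -- `π` is a "linear contraction" with the rank-one property …
      (∀ k k' k'' : Adjointable M N,
        (∀ z, k''.toFun z = k.toFun z + k'.toFun z) → π k'' = π k + π k') ∧
      (∀ (c : ℂ) (k k' : Adjointable M N),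
        (∀ z, k'.toFun z = c • k.toFun z) → π k' = c • π k) ∧
      (∀ k : Adjointable M N, ‖π k‖ ≤ ‖k.toFun‖) ∧
      (∀ (k : Adjointable M N) (y : Y) (x : X),
        (∀ z, k.toFun z = N.rsmul y (M.inner x z)) → π k = πY y * star (πX x)) ∧
      -- … and it is the unique such map
      (∀ ρ : Adjointable M N → D,
        ((∀ k k' k'' : Adjointable M N,
          (∀ z, k''.toFun z = k.toFun z + k'.toFun z) → ρ k'' = ρ k + ρ k') ∧
         (∀ (c : ℂ) (k k' : Adjointable M N),
          (∀ z, k'.toFun z = c • k.toFun z) → ρ k' = c • ρ k) ∧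
         (∀ k : Adjointable M N, ‖ρ k‖ ≤ ‖k.toFun‖) ∧
         (∀ (k : Adjointable M N) (y : Y) (x : X),
          (∀ z, k.toFun z = N.rsmul y (M.inner x z)) → ρ k = πY y * star (πX x))) →
        ρ = π) ∧
      -- the covariance property `π_Y(k x) = π(k) π_X(x)`
      (∀ (k : Adjointable M N) (x : X), πY (k.toFun x) = π k * πX x) ∧
      -- the companion maps are determined by the same rank-one properties …
      (∀ (k' : Adjointable N M) (y : Y) (x : X),
        (∀ z, k'.toFun z = M.rsmul x (N.inner y z)) → π' k' = πX x * star (πY y)) ∧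
      (∀ (k : Adjointable M M) (x x' : X),
        (∀ z, k.toFun z = M.rsmul x (M.inner x' z)) → πXX k = πX x * star (πX x')) ∧
      (∀ (k : Adjointable N N) (y y' : Y),
        (∀ z, k.toFun z = N.rsmul y (N.inner y' z)) → πYY k = πY y * star (πY y')) ∧
      -- … and the family is compatible with adjoints and composition
      (∀ k : Adjointable M N, π' k.flip = star (π k)) ∧
      (∀ (k : Adjointable M N) (k' : Adjointable N M), πYY (k.comp k') = π k * π' k') ∧
      (∀ (k : Adjointable M N) (k' : Adjointable N M), πXX (k'.comp k) = π' k' * π k) ∧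
      -- if `π_A` is injective, everything is isometric
      (Function.Injective πA →
        (∀ k : Adjointable M N, ‖π k‖ = ‖k.toFun‖) ∧
        (∀ x : X, ‖πX x‖ = ‖x‖) ∧ (∀ y : Y, ‖πY y‖ = ‖y‖)) := by
  have hX : M.Rep πA πX := ⟨hXadd, hXsmul, hXr, hXi⟩
  have hY : N.Rep πA πY := ⟨hYadd, hYsmul, hYr, hYi⟩
  refine ⟨extendOp u πX πY, extendOp v πY πX, extendOp u πX πX, extendOp v πY πY,
    ?_, ?_, hX.norm_extendOp_le hY hu hv, hX.extendOp_rankOne hY hu, ?_,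
    fun k x => (hX.extendOp_mul hY hu k x).symm,
    fun k y x => hY.extendOp_rankOne hX hv k x y, hX.extendOp_rankOne hX hu,
    hY.extendOp_rankOne hY hv, hX.extendOp_flip hY hu hv,
    hX.extendOp_comp hY hu, fun k k' => hY.extendOp_comp hX hv k' k, ?_⟩
  · intro k k' k'' h
    simp only [extendOp, h, hYadd, add_mul, Finset.sum_add_distrib]
  · intro c k k' h
    simp only [extendOp, h, hYsmul, smul_mul_assoc, Finset.smul_sum]
  · rintro ρ ⟨hadd, -, -, hone⟩
    funext k
    exact hu.eq_extendOp ρ hadd hone k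
  · intro hA
    refine ⟨fun k => le_antisymm (hX.norm_extendOp_le hY hu hv k) ?_, hX.norm_eq hA, hY.norm_eq hA⟩
    refine ContinuousLinearMap.opNorm_le_bound _ (norm_nonneg _) fun x => ?_
    rw [← hY.norm_eq hA, ← hX.norm_eq hA x, ← hX.extendOp_mul hY hu]
    exact norm_mul_le _ _
end
end

section
/- Let X be a full finite projective Hilbert bimodule over a unital C*-algebra A and {u_1,…,u_n} a basis of X. The restriction of the completely positive map σ(T) = Σ_i S_{u_i} T S_{u_i}* to the relative commutant A' ∩ O_X is a unital injective *-homomorphism (σ(T_1T_2) = σ(T_1)σ(T_2), σ(T*) = σ(T)*, and σ(T) = 0 implies T = 0 for T ∈ A' ∩ O_X), and it is independent of the choice of basis: for any other basis {v_1,…,v_m} of X, Σ_j S_{v_j} T S_{v_j}* = Σ_i S_{u_i} T S_{u_i}* for all T ∈ A' ∩ O_X. -/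
/-!
Everything follows from the intertwining relation `σ_v(T) S_x = S_x T`, valid for every basis `v`,
every `x : X` and every `T` commuting with `A`: moving `T` past `(v_j|x)` gives
`∑ S_{v_j} T S_{v_j}* S_x = ∑ S_{v_j} T (v_j|x) = ∑ S_{v_j (v_j|x)} T = S_x T`.

Multiplying on the right by `1 = ∑ S_{u_i} S_{u_i}*` shows that `σ_v(T)` does not depend on `v`;
applying the relation with `x = u_i` inside `σ(T) σ(T')` gives multiplicativity.
If `σ(T) = 0`, then `S_x T = 0` for all `x`, hence `(x|y) T = S_x* S_y T = 0` for all `x, y`, so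
`a T = 0` for all `a : A` because `X` is full, and `a = 1` gives `T = 0`.
-/

noncomputable section

universe uO

open scoped BigOperators

section Helpers

variable {A : Type*} [CStarAlgebra A] {X : Type*}
  [NormedAddCommGroup X] [NormedSpace ℂ X] {M : HilbertBimodule A X}

lemma HilbertBimodule.Represents.map_sum {D : Type*} [CStarAlgebra D] {V : X → D}
    {ρ : A →⋆ₐ[ℂ] D} (h : M.Represents V ρ) {ι : Type*} (s : Finset ι) (f : ι → X) :
    V (∑ i ∈ s, f i) = ∑ i ∈ s, V (f i) :=
  _root_.map_sum (AddMonoidHom.mk' V h.map_add) f s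

/-- The intertwining relation `σ_v(T) S_x = S_x T` for `T` in the relative commutant of `A`. -/
lemma HilbertBimodule.Represents.sum_conj_mul {D : Type*} [CStarAlgebra D] {V : X → D}
    {ρ : A →⋆ₐ[ℂ] D} (h : M.Represents V ρ) {m : ℕ} {v : Fin m → X} (hv : M.IsBasis v)
    {T : D} (hT : ∀ a : A, ρ a * T = T * ρ a) (x : X) :
    (∑ j, V (v j) * T * star (V (v j))) * V x = V x * T := by
  calc (∑ j, V (v j) * T * star (V (v j))) * V x
      = ∑ j, V (M.rsmul (v j) (M.inner (v j) x)) * T := by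
        rw [Finset.sum_mul]
        refine Finset.sum_congr rfl fun j _ => ?_
        rw [mul_assoc, h.map_inner, mul_assoc, ← hT, ← mul_assoc, h.map_rsmul]
    _ = V x * T := by rw [← Finset.sum_mul, ← h.map_sum, hv x]

open scoped CStarAlgebra in
/-- Over a full module, an element annihilated on the left by `ρ` of every inner product is
zero. -/
lemma HilbertBimodule.IsFull.eq_zero_of_inner_mul (hfull : M.IsFull) {D : Type*} [CStarAlgebra D]
    (ρ : A →⋆ₐ[ℂ] D) {T : D} (hT : ∀ x y : X, ρ (M.inner x y) * T = 0) : T = 0 := by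
  let L : A →ₗ[ℂ] D := (LinearMap.mulRight ℂ T).comp ρ.toAlgHom.toLinearMap
  have hL : ∀ a, L a = ρ a * T := fun _ => rfl
  have hclosed : IsClosed (LinearMap.ker L : Set A) := by
    have hc : Continuous fun a => ρ a * T := (map_continuous ρ).mul continuous_const
    exact isClosed_singleton.preimage hc
  have hle : (Submodule.span ℂ {a : A | ∃ x y : X, a = M.inner x y}).topologicalClosure
      ≤ LinearMap.ker L := by
    refine Submodule.topologicalClosure_minimal _ (Submodule.span_le.2 ?_) hclosed
    rintro _ ⟨x, y, rfl⟩
    exact hT x y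
  have h1 : (1 : A) ∈ LinearMap.ker L := hle (by rw [hfull]; trivial)
  simpa [hL] using h1

end Helpers

/-- Lemma 3.1: the restriction of `σ(T) = Σᵢ S_{uᵢ} T S_{uᵢ}*` to the
relative commutant `A' ∩ O_X` is a unital injective *-homomorphism, independent of the
choice of the basis of `X`. -/
theorem statement5 {A : Type*} [CStarAlgebra A] {X : Type*}
    [NormedAddCommGroup X] [NormedSpace ℂ X] {M : HilbertBimodule A X}
    (hfull : M.IsFull) {n : ℕ} {u : Fin n → X} (hu : M.IsBasis u)
    {O : Type*} [CStarAlgebra O] (P : PimsnerAlgebra M u O) :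
    P.gsh 1 = 1 ∧
    (∀ T ∈ P.commA, ∀ T' ∈ P.commA, P.gsh (T * T') = P.gsh T * P.gsh T') ∧
    (∀ T ∈ P.commA, P.gsh (star T) = star (P.gsh T)) ∧
    (∀ T ∈ P.commA, P.gsh T = 0 → T = 0) ∧
    (∀ (m : ℕ) (v : Fin m → X), M.IsBasis v → ∀ T ∈ P.commA,
      (∑ j, P.S (v j) * T * star (P.S (v j))) = P.gsh T) := by
  have key : ∀ T ∈ P.commA, ∀ x, P.gsh T * P.S x = P.S x * T :=
    fun T hT x => P.rep.sum_conj_mul hu hT x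
  refine ⟨?_, ?_, ?_, ?_, ?_⟩
  · simpa [PimsnerAlgebra.gsh] using P.supp
  · intro T hT T' _
    conv_rhs => rw [PimsnerAlgebra.gsh.eq_def P T', Finset.mul_sum]
    refine Finset.sum_congr rfl fun i _ => ?_
    simp only [← mul_assoc, key T hT]
  · intro T _
    simp [PimsnerAlgebra.gsh, star_sum, mul_assoc]
  · intro T hT h0
    refine hfull.eq_zero_of_inner_mul P.ja fun x y => ?_
    rw [← P.rep.map_inner, mul_assoc, ← key T hT, h0, zero_mul, mul_zero]
  · intro m v hv T hT
    -- Insert `1 = ∑ S_{u_i} S_{u_i}*` on the right and intertwine with respect to `v`.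
    rw [← mul_one (∑ j, P.S (v j) * T * star (P.S (v j))), ← P.supp, Finset.mul_sum]
    refine Finset.sum_congr rfl fun i _ => ?_
    rw [← mul_assoc, P.rep.sum_conj_mul hv hT]
end
end

section
/- Let X be a full finite projective Hilbert bimodule over a unital C*-algebra A, {u_i} a basis of X, and σ(T) = Σ_i S_{u_i} T S_{u_i}* the associated completely positive map on O_X. For every T ∈ A' ∩ O_X and x_1,…,x_m ∈ X one has σ^m(T) S_{x_1}⋯S_{x_m} = S_{x_1}⋯S_{x_m} T; consequently σ^m(T) commutes with every element of K_A(X^{⊗m}) ⊂ O_X. In particular σ(T) commutes with A ⊂ K_A(X) and σ maps A' ∩ O_X into itself. -/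
/-!
The basis expansion `x = Σ_i u_i (u_i|x)` and the commutation of `T` with `A` give
`σ(T) S_x = Σ_i S_{u_i} T (u_i|x) = Σ_i S_{u_i} (u_i|x) T = S_x T`.
Together with `Σ_i S_{u_i} S_{u_i}* = 1` this intertwining relation yields
`a σ(T) = Σ_i S_{a u_i} T S_{u_i}* = Σ_i σ(T) S_{a u_i} S_{u_i}* = σ(T) a`,
so `σ` preserves `A' ∩ O_X` and the relation can be iterated along words. Since `σ` and
`A' ∩ O_X` are stable under the involution, the adjoint relation `W* σ^m(T) = T W*` also holds
for words `W` of length `m`; hence `σ^m(T)` commutes with each `W V*`, and by continuity with the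
closed span of these.
-/


noncomputable section

universe uO

open scoped BigOperators

namespace PimsnerAlgebra

variable {A : Type*} [CStarAlgebra A] {X : Type*}
  [NormedAddCommGroup X] [NormedSpace ℂ X] {M : HilbertBimodule A X}
  {n : ℕ} {u : Fin n → X} {O : Type*} [CStarAlgebra O]

theorem S_sum (P : PimsnerAlgebra M u O) {ι : Type*} (s : Finset ι) (f : ι → X) :
    P.S (∑ i ∈ s, f i) = ∑ i ∈ s, P.S (f i) :=
  map_sum (AddMonoidHom.mk' P.S P.rep.map_add) f s

/-- The intertwining relation `σ(T) S_x = S_x T` for `T` in the relative commutant of `A`. -/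
theorem gsh_mul_S (P : PimsnerAlgebra M u O) (hu : M.IsBasis u) {T : O} (hT : T ∈ P.commA)
    (x : X) : P.gsh T * P.S x = P.S x * T := by
  conv_rhs => rw [← hu x, S_sum, Finset.sum_mul]
  rw [gsh, Finset.sum_mul]
  refine Finset.sum_congr rfl fun i _ => ?_
  rw [P.rep.map_rsmul, mul_assoc, P.rep.map_inner, mul_assoc, mul_assoc, hT]

theorem gsh_mem_commA (P : PimsnerAlgebra M u O) (hu : M.IsBasis u) {T : O}
    (hT : T ∈ P.commA) : P.gsh T ∈ P.commA := by
  intro a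
  calc P.ja a * P.gsh T
      = ∑ i, P.gsh T * P.ja a * (P.S (u i) * star (P.S (u i))) := by
        rw [gsh, Finset.mul_sum, ← gsh]
        refine Finset.sum_congr rfl fun i _ => ?_
        have h := gsh_mul_S P hu hT (M.lsmul a (u i))
        rw [P.rep.map_lsmul] at h
        simp only [← mul_assoc] at h ⊢
        rw [h]
    _ = P.gsh T * P.ja a := by rw [← Finset.mul_sum, P.supp, mul_one]

theorem iterate_gsh_mem_commA (P : PimsnerAlgebra M u O) (hu : M.IsBasis u) {T : O}
    (hT : T ∈ P.commA) (m : ℕ) : P.gsh^[m] T ∈ P.commA := by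
  induction m with
  | zero => exact hT
  | succ m ih =>
    rw [Function.iterate_succ_apply']
    exact gsh_mem_commA P hu ih

theorem iterate_gsh_mul_wordOf (P : PimsnerAlgebra M u O) (hu : M.IsBasis u) {T : O}
    (hT : T ∈ P.commA) (xs : List X) :
    P.gsh^[xs.length] T * wordOf P.S xs = wordOf P.S xs * T := by
  induction xs with
  | nil => simp [wordOf]
  | cons x xs ih =>
    rw [List.length_cons, Function.iterate_succ_apply', wordOf, ← mul_assoc,
      gsh_mul_S P hu (iterate_gsh_mem_commA P hu hT _), mul_assoc, ih, mul_assoc]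

theorem star_mem_commA (P : PimsnerAlgebra M u O) {T : O} (hT : T ∈ P.commA) :
    star T ∈ P.commA := by
  intro a
  simpa [map_star] using (congrArg star (hT (star a))).symm

theorem gsh_star (P : PimsnerAlgebra M u O) (T : O) : P.gsh (star T) = star (P.gsh T) := by
  simp [gsh, star_sum, mul_assoc]

theorem star_wordOf_mul_iterate_gsh (P : PimsnerAlgebra M u O) (hu : M.IsBasis u) {T : O}
    (hT : T ∈ P.commA) (ys : List X) :
    star (wordOf P.S ys) * P.gsh^[ys.length] T = T * star (wordOf P.S ys) := by
  have h := congrArg star (iterate_gsh_mul_wordOf P hu (star_mem_commA P hT) ys)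
  have hs : P.gsh^[ys.length] (star T) = star (P.gsh^[ys.length] T) :=
    (Function.Semiconj.iterate_right (f := star)
      (fun U => (P.gsh_star U).symm) ys.length T).symm
  rw [hs] at h
  simpa using h

/-- `σ^m(T)` commutes with `K_A(X^{⊗m})`: the commutation is checked on the products `W V*`
of words of length `m` and passes to the closed linear span. -/
theorem iterate_gsh_comm_Kspace (P : PimsnerAlgebra M u O) (hu : M.IsBasis u) {T : O}
    (hT : T ∈ P.commA) (m : ℕ) {k : O} (hk : k ∈ P.Kspace m) :
    P.gsh^[m] T * k = k * P.gsh^[m] T := by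
  have hF : ∀ d ∈ P.Fspace m m, P.gsh^[m] T * d = d * P.gsh^[m] T := by
    intro d hd
    induction hd using Submodule.span_induction with
    | mem d hd =>
      obtain ⟨xs, ys, hxs, hys, rfl⟩ := hd
      have h₁ := iterate_gsh_mul_wordOf P hu hT xs
      have h₂ := star_wordOf_mul_iterate_gsh P hu hT ys
      rw [hxs] at h₁
      rw [hys] at h₂
      rw [← mul_assoc, h₁, mul_assoc, mul_assoc, h₂]
    | zero => simp
    | add x y _ _ hx hy => rw [mul_add, add_mul, hx, hy]
    | smul c x _ hx => rw [mul_smul_comm, smul_mul_assoc, hx]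
  have hclosed : IsClosed {d : O | P.gsh^[m] T * d = d * P.gsh^[m] T} :=
    isClosed_eq (continuous_const.mul continuous_id) (continuous_id.mul continuous_const)
  exact closure_minimal hF hclosed hk

end PimsnerAlgebra

/-- Lemma 3.2: for `T ∈ A' ∩ O_X`,
`σ^m(T) S_{x₁}⋯S_{x_m} = S_{x₁}⋯S_{x_m} T`; consequently `σ^m(T)` commutes with
`K_A(X^{⊗m}) ⊆ O_X`; in particular `σ(T)` commutes with `A` and `σ` preserves
`A' ∩ O_X`. -/
theorem statement6 {A : Type*} [CStarAlgebra A] {X : Type*}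
    [NormedAddCommGroup X] [NormedSpace ℂ X] {M : HilbertBimodule A X}
    (hfull : M.IsFull) {n : ℕ} {u : Fin n → X} (hu : M.IsBasis u)
    {O : Type*} [CStarAlgebra O] (P : PimsnerAlgebra M u O) :
    ∀ T ∈ P.commA,
      (∀ (m : ℕ) (xs : List X), xs.length = m →
        (P.gsh)^[m] T * wordOf P.S xs = wordOf P.S xs * T) ∧
      (∀ m : ℕ, ∀ k ∈ P.Kspace m, (P.gsh)^[m] T * k = k * (P.gsh)^[m] T) ∧
      (∀ a : A, P.ja a * P.gsh T = P.gsh T * P.ja a) := by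
  intro T hT
  refine ⟨?_, fun m k hk => P.iterate_gsh_comm_Kspace hu hT m hk, P.gsh_mem_commA hu hT⟩
  rintro m xs rfl
  exact P.iterate_gsh_mul_wordOf hu hT xs
end
end

section
/- If J is a closed X-invariant ideal of A, then the map φ̃ : A/J → L_{A/J}((X/X_J)_{A/J}) given by φ̃([a])[x] = [φ(a)x] is a well-defined *-homomorphism whose kernel is J_X/J. In particular, if J_X = J, then φ̃ is isometric. -/
noncomputable section

universe uO

open scoped BigOperators

/-!
The action descends because of two facts. If `a ∈ J`, then `(ax|ax) = (x|a⋆a x) ∈ J` by invariance,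
so `a` sends `X` into `X_J`. If `x ∈ X_J`, then `(y|x) ∈ J` for every `y` (it maps to
`(qX y|0) = 0` in `A/J`), and `(ax|ax) = (a⋆a x|x) ∈ J`. The algebraic identities and the
computation of the kernel then pass through the surjections `q` and `qX`.

For the isometry, complex linearity of the left action in the algebra variable is not part of the
structure `HilbertBimodule`, so the usual theorem on injective *-homomorphisms of C*-algebras does
not apply verbatim. Additivity gives `ℚ`-linearity, and that is enough:
* if `s` is rational with `‖a‖² < s`, then `s - a⋆a = b⋆b`, so `s(x|x) = (ax|ax) + (bx|bx)`
  and `‖ax‖² ≤ s‖x‖²`;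
* if `‖ax‖ ≤ r‖x‖` for all `x` and `r² < s < ‖a‖²` with `s` rational, let `c = (a⋆a - s)₊ ≠ 0`.
  Then `c(a⋆a)c = sc² + c³` gives `(acx|acx) ≥ s(cx|cx)`, hence `s‖cx‖² ≤ r²‖cx‖²`, so `cx = 0`
  for all `x`, contradicting injectivity.
-/

theorem norm_star_mul_self_le_add {B : Type*} [CStarAlgebra B] (a b : B) :
    ‖star a * a‖ ≤ ‖star a * a + star b * b‖ := by
  let _ := CStarAlgebra.spectralOrder B
  have := CStarAlgebra.spectralOrderedRing B
  exact CStarAlgebra.norm_le_norm_of_nonneg_of_le (star_mul_self_nonneg a)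
    (le_add_of_nonneg_right (star_mul_self_nonneg b))

theorem exists_smul_one_eq_add_star_mul_self {B : Type*} [CStarAlgebra B] (a : B) (s : ℝ)
    (hs : ‖a‖ ^ 2 ≤ s) : ∃ b : B, (s : ℂ) • (1 : B) = star a * a + star b * b := by
  let _ := CStarAlgebra.spectralOrder B
  have := CStarAlgebra.spectralOrderedRing B
  have h1 : star a * a ≤ algebraMap ℝ B s := by
    refine (IsSelfAdjoint.le_algebraMap_norm_self (IsSelfAdjoint.star_mul_self a)).trans ?_
    rw [CStarRing.norm_star_mul_self, ← sq]
    exact algebraMap_mono B hs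
  obtain ⟨b, hb⟩ := CStarAlgebra.nonneg_iff_eq_star_mul_self.mp (sub_nonneg.mpr h1)
  refine ⟨b, ?_⟩
  rw [← hb, Algebra.algebraMap_eq_smul_one, Complex.coe_smul]
  abel

/-- The nonzero element `c = (a⋆a - s)₊` satisfies `c(a⋆a)c = sc² + d⋆d`, with `d⋆d = c³`. -/
theorem exists_cutoff {B : Type*} [CStarAlgebra B] (a : B) (s : ℝ) (hs0 : 0 ≤ s) (hs : s < ‖a‖ ^ 2) :
    ∃ c d : B, c ≠ 0 ∧
      star (a * c) * (a * c) = (s : ℂ) • (star c * c) + star d * d := by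
  let _ := CStarAlgebra.spectralOrder B
  have := CStarAlgebra.spectralOrderedRing B
  have hsa : IsSelfAdjoint (star a * a) := IsSelfAdjoint.star_mul_self a
  have ha : a ≠ 0 := by
    rintro rfl
    simp at hs
    linarith
  have : Nontrivial B := ⟨a, 0, ha⟩
  set h := star a * a with hh
  set f : ℝ → ℝ := fun t => max (t - s) 0 with hf
  have hfc : Continuous f := by fun_prop
  set c := cfc f h with hc
  have hc0 : 0 ≤ c := cfc_nonneg fun t _ => le_max_right _ _
  have hcs : star c = c := (cfc_predicate f h : IsSelfAdjoint c)
  obtain ⟨e, he⟩ := CStarAlgebra.nonneg_iff_eq_star_mul_self.mp hc0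
  have key : h * c = (s : ℂ) • c + c * c := by
    have h1 : (s : ℂ) • c + c * c = cfc (fun t => s • f t + f t * f t) h := by
      rw [cfc_add (a := h) (fun t => s • f t) (fun t => f t * f t), cfc_smul (a := h) s f,
        cfc_mul (a := h) f f, Complex.coe_smul]
    have h2 : h * c = cfc (fun t => t * f t) h := by
      rw [cfc_mul (a := h) (fun t => t) f, cfc_id' ℝ h]
    rw [h1, h2]
    congr 1
    funext t
    simp only [hf, smul_eq_mul]
    rcases le_total (t - s) 0 with ht | ht
    · simp [max_eq_right ht]
    · rw [max_eq_left ht]; ring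
  refine ⟨c, e * c, ?_, ?_⟩
  · intro hz
    have hmem : ‖h‖ ∈ spectrum ℝ h :=
      CStarAlgebra.norm_mem_spectrum_of_nonneg (star_mul_self_nonneg a)
    have : f ‖h‖ ∈ spectrum ℝ c := by
      rw [hc, cfc_map_spectrum f h]
      exact ⟨_, hmem, rfl⟩
    rw [hz, spectrum.zero_eq, Set.mem_singleton_iff] at this
    have h3 : ‖h‖ = ‖a‖ ^ 2 := by rw [hh, CStarRing.norm_star_mul_self, sq]
    have h4 := le_max_left (‖h‖ - s) 0
    simp only [hf] at this
    rw [this] at h4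
    linarith
  · have h5 : star (a * c) * (a * c) = c * (h * c) := by
      rw [star_mul, hcs, hh]; simp only [mul_assoc]
    have h6 : star (e * c) * (e * c) = c * (c * c) := by
      rw [star_mul, hcs]
      nth_rewrite 4 [he]
      simp only [mul_assoc]
    rw [h5, h6, key, hcs, mul_add, mul_smul_comm]

namespace RightHilbertModule

variable {B : Type*} [CStarAlgebra B] {Y : Type*} [NormedAddCommGroup Y] [NormedSpace ℂ Y]

theorem inner_zero_right (N : RightHilbertModule B Y) (x : Y) : N.inner x 0 = 0 := by
  simpa using N.inner_smulC_right 0 x 0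

theorem norm_sq_le_norm_inner_add (N : RightHilbertModule B Y) (x y : Y) :
    ‖x‖ ^ 2 ≤ ‖N.inner x x + N.inner y y‖ := by
  obtain ⟨a, ha⟩ := N.inner_self_pos x
  obtain ⟨b, hb⟩ := N.inner_self_pos y
  rw [N.norm_sq_eq, ha, hb]
  exact norm_star_mul_self_le_add a b

/-- A faithful action of a C*-algebra by adjointable operators is isometric. The action is only
assumed additive in the algebra variable. -/
theorem sSup_norm_action_eq (N : RightHilbertModule B Y) (L : B → Y → Y)
    (L_addB : ∀ a b x, L (a + b) x = L a x + L b x)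
    (L_mul : ∀ a b x, L (a * b) x = L a (L b x))
    (L_one : ∀ x, L 1 x = x)
    (L_smul : ∀ (c : ℂ) a x, L a (c • x) = c • L a x)
    (L_inner : ∀ a x y, N.inner (L a x) y = N.inner x (L (star a) y))
    (L_inj : ∀ a, (∀ x, L a x = 0) → a = 0) (a : B) :
    sSup {t : ℝ | ∃ x : Y, ‖x‖ ≤ 1 ∧ t = ‖L a x‖} = ‖a‖ := by
  have L_rat : ∀ (s : ℚ) b x, L (((s : ℝ) : ℂ) • b) x = ((s : ℝ) : ℂ) • L b x := by
    intro s b x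
    have := map_ratCast_smul (AddMonoidHom.mk' (fun b => L b x) fun a b => L_addB a b x) ℂ ℂ s b
    simpa using this
  have inner_LL : ∀ b x, N.inner (L b x) (L b x) = N.inner x (L (star b * b) x) := by
    intro b x
    rw [L_inner, L_mul]
  have upper : ∀ x, ‖L a x‖ ^ 2 ≤ ‖a‖ ^ 2 * ‖x‖ ^ 2 := by
    intro x
    have hs : ∀ s : ℚ, ‖a‖ ^ 2 < s → ‖L a x‖ ^ 2 ≤ s * ‖x‖ ^ 2 := by
      intro s hs
      have hs0 : (0 : ℝ) ≤ s := (sq_nonneg _).trans hs.le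
      obtain ⟨b, hb⟩ := exists_smul_one_eq_add_star_mul_self a s hs.le
      have h1 : N.inner (L a x) (L a x) + N.inner (L b x) (L b x)
          = ((s : ℝ) : ℂ) • N.inner x x := by
        rw [inner_LL, inner_LL, ← N.inner_add_right, ← L_addB, ← hb, L_rat, L_one,
          N.inner_smulC_right]
      have h2 := N.norm_sq_le_norm_inner_add (L a x) (L b x)
      rwa [h1, norm_smul, Complex.norm_real, Real.norm_of_nonneg hs0, ← N.norm_sq_eq] at h2
    by_contra! hlt
    have hx : 0 < ‖x‖ ^ 2 := by
      by_contra hx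
      have hx0 : ‖x‖ ^ 2 = 0 := le_antisymm (not_lt.mp hx) (sq_nonneg _)
      obtain ⟨s, h1⟩ := exists_rat_gt (‖a‖ ^ 2)
      have := hs s h1
      rw [hx0] at hlt this
      linarith
    obtain ⟨s, h1, h2⟩ := exists_rat_btwn ((lt_div_iff₀ hx).mpr hlt)
    have := hs s h1
    rw [lt_div_iff₀ hx] at h2
    linarith
  have upper' : ∀ x, ‖L a x‖ ≤ ‖a‖ * ‖x‖ := fun x =>
    le_of_sq_le_sq ((upper x).trans_eq (mul_pow _ _ _).symm) (by positivity)
  have L_zero : ∀ b, L b 0 = 0 := fun b => by simpa using L_smul 0 b 0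
  set S := {t : ℝ | ∃ x : Y, ‖x‖ ≤ 1 ∧ t = ‖L a x‖} with hS
  have hbd : ∀ t ∈ S, t ≤ ‖a‖ := by
    rintro t ⟨x, hx, rfl⟩
    exact (upper' x).trans (mul_le_of_le_one_right (norm_nonneg a) hx)
  have h0 : (0 : ℝ) ∈ S := ⟨0, by simp, by simp [L_zero]⟩
  refine le_antisymm (csSup_le ⟨0, h0⟩ hbd) ?_
  by_contra! hlt
  set r := sSup S with hr
  have hr0 : 0 ≤ r := le_csSup ⟨_, hbd⟩ h0
  have lower : ∀ x, ‖L a x‖ ≤ r * ‖x‖ := by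
    intro x
    rcases eq_or_ne x 0 with rfl | hx
    · simp [L_zero]
    have hx' : 0 < ‖x‖ := norm_pos_iff.mpr hx
    have h1 : ‖L a (((‖x‖⁻¹ : ℝ) : ℂ) • x)‖ ≤ r := by
      refine le_csSup ⟨_, hbd⟩ ⟨_, ?_, rfl⟩
      rw [norm_smul, Complex.norm_real, norm_inv, norm_norm, inv_mul_cancel₀ hx'.ne']
    rwa [L_smul, norm_smul, Complex.norm_real, norm_inv, norm_norm, inv_mul_le_iff₀ hx',
      mul_comm] at h1
  obtain ⟨s, hs1, hs2⟩ := exists_rat_btwn (pow_lt_pow_left₀ hlt hr0 two_ne_zero)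
  have hs0 : (0 : ℝ) ≤ s := (sq_nonneg _).trans hs1.le
  obtain ⟨c, d, hc, hcd⟩ := exists_cutoff a s hs0 hs2
  refine hc (L_inj c fun x => ?_)
  have h1 : N.inner (L a (L c x)) (L a (L c x))
      = ((s : ℝ) : ℂ) • N.inner (L c x) (L c x) + N.inner (L d x) (L d x) := by
    rw [← L_mul, inner_LL, inner_LL, inner_LL, hcd, L_addB, L_rat, N.inner_add_right,
      N.inner_smulC_right]
  -- Absorbing `s` as the square of the scalar `√s` makes the first summand an inner square.
  have h2 : s * ‖L c x‖ ^ 2 ≤ ‖L a (L c x)‖ ^ 2 := by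
    obtain ⟨p, hp⟩ := N.inner_self_pos (L c x)
    obtain ⟨p', hp'⟩ := N.inner_self_pos (L d x)
    have h3 := norm_star_mul_self_le_add (((√s : ℝ) : ℂ) • p) p'
    have h4 : star (((√s : ℝ) : ℂ) • p) * (((√s : ℝ) : ℂ) • p)
        = ((s : ℝ) : ℂ) • (star p * p) := by
      rw [star_smul, smul_mul_smul_comm, Complex.star_def, Complex.conj_ofReal,
        ← Complex.ofReal_mul, Real.mul_self_sqrt hs0]
    rw [h4, ← hp, ← hp', ← h1, norm_smul, Complex.norm_real, Real.norm_of_nonneg hs0,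
      ← N.norm_sq_eq, ← N.norm_sq_eq] at h3
    exact h3
  have h5 : ‖L a (L c x)‖ ^ 2 ≤ r ^ 2 * ‖L c x‖ ^ 2 := by
    rw [← mul_pow]
    exact pow_le_pow_left₀ (norm_nonneg _) (lower _) 2
  by_contra hne
  have : 0 < ‖L c x‖ ^ 2 := by positivity
  nlinarith

end RightHilbertModule

/-- Proposition 4.2: if `J` is a closed `X`-invariant ideal of `A`,
the left action descends to a well-defined *-homomorphism
`φ̃ : A/J → L_{A/J}(X/X_J)`, `φ̃([a])[x] = [φ(a)x]`, with kernel `J_X/J`; in particular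
`φ̃` is isometric when `J_X = J`. -/
theorem statement7 {A : Type*} [CStarAlgebra A] {X : Type*}
    [NormedAddCommGroup X] [NormedSpace ℂ X] {M : HilbertBimodule A X}
    (hfull : M.IsFull) {n : ℕ} {u : Fin n → X} (hu : M.IsBasis u)
    (hfaith : M.LeftFaithful)
    (J : Submodule ℂ A) (hJc : IsClosedIdeal J) (hJinv : M.XInvariant J)
    {A' : Type*} [CStarAlgebra A'] (q : A →⋆ₐ[ℂ] A')
    {X' : Type*} [NormedAddCommGroup X'] [NormedSpace ℂ X']
    (M' : RightHilbertModule A' X') (qX : X → X')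
    (hQ : QuotientRightModule M J q M' qX) :
    ∃ L : A' → X' → X',
      -- `φ̃` is a well-defined unital *-homomorphism into `L_{A/J}(X/X_J)` …
      (∀ (a' : A') (x' y' : X'), L a' (x' + y') = L a' x' + L a' y') ∧
      (∀ (a' b' : A') (x' : X'), L (a' + b') x' = L a' x' + L b' x') ∧
      (∀ (a' b' : A') (x' : X'), L (a' * b') x' = L a' (L b' x')) ∧
      (∀ x' : X', L 1 x' = x') ∧
      (∀ (c : ℂ) (a' : A') (x' : X'), L a' (c • x') = c • L a' x') ∧
      (∀ (a' : A') (x' : X') (b' : A'), M'.rsmul (L a' x') b' = L a' (M'.rsmul x' b')) ∧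
      (∀ (a' : A') (x' y' : X'), M'.inner (L a' x') y' = M'.inner x' (L (star a') y')) ∧
      -- … given by `φ̃([a])[x] = [φ(a)x]` …
      (∀ (a : A) (x : X), L (q a) (qX x) = qX (M.lsmul a x)) ∧
      -- … with kernel `J_X/J` …
      (∀ a : A, (∀ x' : X', L (q a) x' = 0) ↔ a ∈ M.JX J) ∧
      -- … and isometric if `J_X = J`
      ((∀ a ∈ M.JX J, a ∈ J) →
        ∀ a : A, sSup {t : ℝ | ∃ x' : X', ‖x'‖ ≤ 1 ∧ t = ‖L (q a) x'‖} = ‖q a‖) := by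
  have lsub : ∀ a b x, M.lsmul (a - b) x = M.lsmul a x - M.lsmul b x := fun a b x =>
    map_sub (AddMonoidHom.mk' (fun a => M.lsmul a x) fun a b => M.lsmul_addA a b x) a b
  have lsub' : ∀ a x y, M.lsmul a (x - y) = M.lsmul a x - M.lsmul a y := fun a x y =>
    map_sub (AddMonoidHom.mk' (M.lsmul a) fun x y => M.lsmul_add a x y) x y
  have qsub : ∀ x y, qX (x - y) = qX x - qX y := fun x y =>
    map_sub (AddMonoidHom.mk' qX hQ.qX_add) x y
  have inner_mem : ∀ x y, qX y = 0 → M.inner x y ∈ J := by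
    intro x y hy
    rw [← hQ.q_ker, ← hQ.inner_compat, hy, M'.inner_zero_right]
  have hJ0 : ∀ a ∈ J, ∀ x, qX (M.lsmul a x) = 0 := by
    intro a ha x
    rw [hQ.qX_ker, M.inner_lsmul, ← M.lsmul_mul]
    exact hJinv _ _ _ (hJc.2 _ _ ha).1
  have hX0 : ∀ a x, qX x = 0 → qX (M.lsmul a x) = 0 := by
    intro a x hx
    have h := inner_mem (M.lsmul (star a) (M.lsmul a x)) x hx
    rwa [M.inner_lsmul, star_star, ← hQ.qX_ker] at h
  have wd : ∀ a b x y, q a = q b → qX x = qX y → qX (M.lsmul a x) = qX (M.lsmul b y) := by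
    intro a b x y hab hxy
    have h1 := hJ0 (a - b) ((hQ.q_ker _).mp (by rw [map_sub, hab, sub_self])) x
    have h2 := hX0 b (x - y) (by rw [qsub, hxy, sub_self])
    rw [lsub, qsub, sub_eq_zero] at h1
    rw [lsub', qsub, sub_eq_zero] at h2
    exact h1.trans h2
  obtain ⟨L, hL⟩ : ∃ L : A' → X' → X', ∀ a x, L (q a) (qX x) = qX (M.lsmul a x) :=
    ⟨fun a' x' => qX (M.lsmul (Function.surjInv hQ.q_surj a') (Function.surjInv hQ.qX_surj x')),
      fun a x => wd _ _ _ _ (Function.surjInv_eq _ _) (Function.surjInv_eq _ _)⟩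
  have L_addA : ∀ (a' b' : A') (x' : X'), L (a' + b') x' = L a' x' + L b' x' := by
    intro a' b' x'
    obtain ⟨a, rfl⟩ := hQ.q_surj a'
    obtain ⟨b, rfl⟩ := hQ.q_surj b'
    obtain ⟨x, rfl⟩ := hQ.qX_surj x'
    rw [← map_add, hL, hL, hL, M.lsmul_addA, hQ.qX_add]
  have L_mul : ∀ (a' b' : A') (x' : X'), L (a' * b') x' = L a' (L b' x') := by
    intro a' b' x'
    obtain ⟨a, rfl⟩ := hQ.q_surj a'
    obtain ⟨b, rfl⟩ := hQ.q_surj b'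
    obtain ⟨x, rfl⟩ := hQ.qX_surj x'
    rw [← map_mul, hL, hL, hL, M.lsmul_mul]
  have L_one : ∀ x' : X', L 1 x' = x' := by
    intro x'
    obtain ⟨x, rfl⟩ := hQ.qX_surj x'
    rw [← map_one q, hL, M.lsmul_one]
  have L_smul : ∀ (c : ℂ) (a' : A') (x' : X'), L a' (c • x') = c • L a' x' := by
    intro c a' x'
    obtain ⟨a, rfl⟩ := hQ.q_surj a'
    obtain ⟨x, rfl⟩ := hQ.qX_surj x'
    rw [← hQ.qX_smul, hL, hL, M.lsmul_smulC, hQ.qX_smul]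
  have L_inner : ∀ (a' : A') (x' y' : X'),
      M'.inner (L a' x') y' = M'.inner x' (L (star a') y') := by
    intro a' x' y'
    obtain ⟨a, rfl⟩ := hQ.q_surj a'
    obtain ⟨x, rfl⟩ := hQ.qX_surj x'
    obtain ⟨y, rfl⟩ := hQ.qX_surj y'
    rw [← map_star, hL, hL, hQ.inner_compat, hQ.inner_compat, M.inner_lsmul]
  have L_ker : ∀ a : A, (∀ x' : X', L (q a) x' = 0) ↔ a ∈ M.JX J := by
    intro a
    constructor
    · intro h x y
      exact inner_mem _ _ (by rw [← hL, h])
    · intro h x'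
      obtain ⟨x, rfl⟩ := hQ.qX_surj x'
      rw [hL, hQ.qX_ker]
      exact h _ _
  refine ⟨L, ?_, L_addA, L_mul, L_one, L_smul, ?_, L_inner, hL, L_ker, ?_⟩
  · intro a' x' y'
    obtain ⟨a, rfl⟩ := hQ.q_surj a'
    obtain ⟨x, rfl⟩ := hQ.qX_surj x'
    obtain ⟨y, rfl⟩ := hQ.qX_surj y'
    rw [← hQ.qX_add, hL, hL, hL, M.lsmul_add, hQ.qX_add]
  · intro a' x' b'
    obtain ⟨a, rfl⟩ := hQ.q_surj a'
    obtain ⟨b, rfl⟩ := hQ.q_surj b'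
    obtain ⟨x, rfl⟩ := hQ.qX_surj x'
    rw [← hQ.rsmul_compat, hL, hL, ← hQ.rsmul_compat, M.lsmul_rsmul]
  · intro hJX a
    refine M'.sSup_norm_action_eq L L_addA L_mul L_one L_smul L_inner (fun b' hb => ?_) (q a)
    obtain ⟨b, rfl⟩ := hQ.q_surj b'
    exact (hQ.q_ker b).mpr (hJX b ((L_ker b).mp hb))
end
end
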